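/- arXiv:0812.4847 — 7 statements merged into one kernel-verified Lean document; each statement's English description precedes it below -/
import Mathlib

section
/- For every 1-Lipschitz function f : ℤ₊ → ℝ and every n ∈ ℤ₊, the first difference of the Stein solution satisfies |Δg_f(n)| ≤ min( 1/(β+1) + (α+2)/(α(α+2) + 2β(α+β+1)), 1/√α + 1/α ). -/
/-- Algebraic core of the estimate. -/
theorem pbd_core (α b b' x d p F T L R g1 g2 : ℝ) (hα : 0 < α) (hb : 0 < b) (hb' : 0 < b')
    (hx : 0 < x) (hd : 0 < d) (hp : 0 < p) (hbb : b < b')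
    (hsum : F + p + T = 1)
    (h1 : b * p * g1 = L - F * (L + R)) (h2 : α * p * g2 = L - (F + p) * (L + R))
    (hL : |L| * x ≤ b * (F + p) - α * F) (hR : |R| * d ≤ α * (T + p) - b * T)
    (hF : b * p ≤ α * F) (hT : α * p ≤ b' * T) :
    |g2 - g1| ≤ (1 / x + 1 / d) * (b * (b' - b + α) / (α * b' + b * b' + α ^ 2)) := by
  set P := b * (F + p) - α * F with hP
  set Q := α * (T + p) - b * T with hQ
  have hP0 : 0 ≤ P := le_trans (by positivity) hL
  have hQ0 : 0 ≤ Q := le_trans (by positivity) hR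
  have hT0 : 0 < T := by
    by_contra h
    push Not at h
    nlinarith [mul_pos hα hp, mul_nonneg hb'.le (neg_nonneg.2 h)]
  have e : α * b * p * (g2 - g1) = -(L * Q) - R * P := by
    have hT' : T = 1 - F - p := by linarith
    rw [hP, hQ, hT']
    linear_combination b * h2 - α * h1
  have hLx : |L| ≤ P / x := by rw [le_div_iff₀ hx]; exact hL
  have hRd : |R| ≤ Q / d := by rw [le_div_iff₀ hd]; exact hR
  have e2 : α * b * p * |g2 - g1| ≤ (1 / x + 1 / d) * (P * Q) := by
    have : α * b * p * |g2 - g1| = |-(L * Q) - R * P| := by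
      rw [← e, abs_mul, abs_of_pos (by positivity : 0 < α * b * p)]
    rw [this]
    calc |-(L * Q) - R * P| ≤ |-(L * Q)| + |R * P| := abs_sub _ _
      _ = |L| * Q + |R| * P := by
        rw [abs_neg, abs_mul, abs_mul, abs_of_nonneg hP0, abs_of_nonneg hQ0]
      _ ≤ P / x * Q + Q / d * P := by gcongr
      _ = _ := by ring
  have s1 : P * (α * (p + T) + b * p) ≤ b ^ 2 * p := by
    have h : b ^ 2 * p * (F + p + T) - P * (α * (p + T) + b * p) = (α * F - b * p) * Q := by
      rw [hP, hQ]; ring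
    have := mul_nonneg (sub_nonneg.2 hF) hQ0
    rw [hsum] at h
    linarith
  have s2 : Q * (α * b' + b * b' + α ^ 2) ≤ α * (b' - b + α) * (α * (p + T) + b * p) := by
    have h : α * (b' - b + α) * (α * (p + T) + b * p) - Q * (α * b' + b * b' + α ^ 2)
        = b ^ 2 * (b' * T - α * p) := by
      rw [hQ]; ring
    have := mul_nonneg (sq_nonneg b) (sub_nonneg.2 hT)
    linarith
  have hE : 0 < α * b' + b * b' + α ^ 2 := by positivity
  have s3 : P * Q ≤ α * b * p * (b * (b' - b + α) / (α * b' + b * b' + α ^ 2)) := by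
    rw [mul_div_assoc', le_div_iff₀ hE]
    have h3 : 0 ≤ α * (b' - b + α) := mul_nonneg hα.le (by linarith)
    calc P * Q * (α * b' + b * b' + α ^ 2) = P * (Q * (α * b' + b * b' + α ^ 2)) := by ring
      _ ≤ P * (α * (b' - b + α) * (α * (p + T) + b * p)) := by gcongr
      _ = α * (b' - b + α) * (P * (α * (p + T) + b * p)) := by ring
      _ ≤ α * (b' - b + α) * (b ^ 2 * p) := by gcongr
      _ = _ := by ring
  have hpos : 0 < α * b * p := by positivity
  refine le_of_mul_le_mul_left ?_ hpos
  calc _ ≤ (1 / x + 1 / d) * (P * Q) := e2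
    _ ≤ (1 / x + 1 / d) * (α * b * p * (b * (b' - b + α) / (α * b' + b * b' + α ^ 2))) := by
      gcongr
    _ = _ := by ring

set_option maxHeartbeats 2000000 in
theorem pbd_final (α β : ℝ) (hα : 0 < α) (hβ : 0 < β) (m : ℕ) (N b b' : ℝ) (hN : N = m + 1)
    (hb : b = N * (β + N - 1)) (hb' : b' = (N + 1) * (β + N)) :
    (1 / (β + N - 1) + 1 / (β + 2 * N)) * (b * (b' - b + α) / (α * b' + b * b' + α ^ 2)) ≤
      min (1 / (β + 1) + (α + 2) / (α * (α + 2) + 2 * β * (α + β + 1)))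
        (1 / Real.sqrt α + 1 / α) := by
  obtain ⟨s, hs, rfl⟩ : ∃ s : ℝ, 0 < s ∧ α = s ^ 2 :=
    ⟨√α, Real.sqrt_pos.2 hα, (Real.sq_sqrt hα.le).symm⟩
  rw [Real.sqrt_sq hs.le]
  rcases Nat.eq_zero_or_pos m with rfl | hm
  · have hN1 : N = 1 := by simp [hN]
    subst hN1
    have hD : 0 < s ^ 2 * (s ^ 2 + 2) + 2 * β * (s ^ 2 + β + 1) := by positivity
    have e : (1 / (β + 1 - 1) + 1 / (β + 2 * 1)) *
        (b * (b' - b + s ^ 2) / (s ^ 2 * b' + b * b' + (s ^ 2) ^ 2)) =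
        (2 * (β + 1) * (s ^ 2 + β + 2) / (β + 2)) /
          (s ^ 2 * (s ^ 2 + 2) + 2 * β * (s ^ 2 + β + 1)) := by
      have e1 : b = β := by rw [hb]; ring
      have e2 : s ^ 2 * b' + b * b' + (s ^ 2) ^ 2 =
          s ^ 2 * (s ^ 2 + 2) + 2 * β * (s ^ 2 + β + 1) := by rw [e1, hb']; ring
      have e3 : b' - b + s ^ 2 = s ^ 2 + β + 2 := by rw [e1, hb']; ring
      rw [e2, e3, e1]
      have : β + 1 - 1 = β := by ring
      rw [this]
      field_simp
      ring
    rw [e]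
    have k : 2 * (β + 1) * (s ^ 2 + β + 2) / (β + 2) ≤ 2 * (β + 1) + 2 * s ^ 2 := by
      rw [div_le_iff₀ (by positivity)]
      nlinarith [sq_nonneg s]
    apply le_min
    · rw [div_le_iff₀ hD]
      have : (1 / (β + 1) + (s ^ 2 + 2) / (s ^ 2 * (s ^ 2 + 2) + 2 * β * (s ^ 2 + β + 1))) *
          (s ^ 2 * (s ^ 2 + 2) + 2 * β * (s ^ 2 + β + 1)) =
          s ^ 4 / (β + 1) + 3 * s ^ 2 + 2 * (β + 1) := by
        field_simp
        ring
      rw [this]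
      have : 0 ≤ s ^ 4 / (β + 1) := by positivity
      nlinarith [sq_nonneg s]
    · rw [div_le_iff₀ hD]
      have : (1 / s + 1 / s ^ 2) * (s ^ 2 * (s ^ 2 + 2) + 2 * β * (s ^ 2 + β + 1)) =
          2 * (β + 1) + s ^ 2 + s * (s ^ 2 + 2 * (β + 1)) + 2 * β * (β + 1) / s
            + 2 * β * (β + 1) / s ^ 2 := by
        field_simp
        ring
      rw [this]
      have h1 : 0 ≤ 2 * β * (β + 1) / s := by positivity
      have h2 : 0 ≤ 2 * β * (β + 1) / s ^ 2 := by positivity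
      have h3 : s ^ 2 ≤ s * (s ^ 2 + 2 * (β + 1)) := by
        rw [sq]
        gcongr
        nlinarith [sq_nonneg (s - 1)]
      linarith
  · have hm' : (1 : ℝ) ≤ m := by exact_mod_cast hm
    have hN2 : 2 ≤ N := by linarith
    obtain ⟨x, hx⟩ : ∃ x, x = β + N - 1 := ⟨_, rfl⟩
    have hxN : N - 1 ≤ x := by linarith
    have hx1 : 1 ≤ x := by linarith
    have hx0 : 0 < x := by linarith
    have hN0 : 0 < N := by linarith
    have hd : β + 2 * N = x + N + 1 := by linarith
    have hbx : b = N * x := by rw [hb, hx]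
    have hbx' : b' = (N + 1) * (x + 1) := by rw [hb', hx]; ring
    rw [← hx, hd]
    have eS : 1 / x + 1 / (x + N + 1) = (2 * x + N + 1) / (x * (x + N + 1)) := by
      rw [div_add_div _ _ (by positivity) (by positivity)]
      congr 1
      ring
    have hb0 : 0 < b := by rw [hbx]; positivity
    have hb0' : 0 < b' := by rw [hbx']; positivity
    have hdiff : b' - b = x + N + 1 := by rw [hbx, hbx']; ring
    rw [eS, hdiff]
    have key1 : b * (x + N + 1 + s ^ 2) / (s ^ 2 * b' + b * b' + (s ^ 2) ^ 2) ≤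
        b / (s ^ 2 + b) := by
      rw [div_le_div_iff₀ (by positivity) (by positivity), ← hdiff]
      have : 0 ≤ b ^ 3 := by positivity
      nlinarith
    apply le_min
    · have h0 : 0 < (s ^ 2 + 2) / (s ^ 2 * (s ^ 2 + 2) + 2 * β * (s ^ 2 + β + 1)) := by
        positivity
      have h1 : 1 / x ≤ 1 / (β + 1) := by
        apply one_div_le_one_div_of_le (by positivity); linarith
      have key2 : b * (x + N + 1 + s ^ 2) / (s ^ 2 * b' + b * b' + (s ^ 2) ^ 2) ≤
          (x + N + 1) / (2 * x + N + 1) := by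
        rcases le_total b (s ^ 2) with h | h
        · refine key1.trans ?_
          rw [div_le_div_iff₀ (by positivity) (by positivity)]
          nlinarith [mul_nonneg hN0.le (sub_nonneg.2 h), mul_nonneg hx0.le (sub_nonneg.2 h)]
        · have : b * (x + N + 1 + s ^ 2) / (s ^ 2 * b' + b * b' + (s ^ 2) ^ 2) ≤
              b * (x + N + 1 + s ^ 2) / (s ^ 2 * b' + b * b') := by
            refine div_le_div_of_nonneg_left (by positivity) (by positivity) ?_
            nlinarith [sq_nonneg (s ^ 2)]
          refine this.trans ?_
          rw [div_le_div_iff₀ (by positivity) (by positivity)]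
          -- linear in `s ^ 2` on `[0, b]`: check both endpoints
          have E0 : b * (x + N + 1) * (2 * x + N + 1) ≤ (x + N + 1) * (b * b') := by
            have : 2 * x + N + 1 ≤ b' := by rw [hbx']; nlinarith
            nlinarith [mul_le_mul_of_nonneg_left this (by positivity : 0 ≤ b * (x + N + 1))]
          have E1 : b * (x + N + 1 + b) * (2 * x + N + 1) ≤ (x + N + 1) * (b * b' + b * b') := by
            have : x + N + 1 + b = b' := by linarith
            rw [this]
            nlinarith [mul_pos hb0 hb0', mul_pos (mul_pos hb0 hb0') hN0]
          have w0 := mul_le_mul_of_nonneg_left E0 (sub_nonneg.2 h)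
          have w1 := mul_le_mul_of_nonneg_left E1 (sq_nonneg s)
          refine le_of_mul_le_mul_left ?_ hb0
          linarith
      calc _ ≤ (2 * x + N + 1) / (x * (x + N + 1)) * ((x + N + 1) / (2 * x + N + 1)) := by
            gcongr
        _ = 1 / x := by field_simp
        _ ≤ _ := by linarith
    · have h0 : 0 < 1 / s ^ 2 := by positivity
      have : (2 * x + N + 1) / (x * (x + N + 1)) * (b / (s ^ 2 + b)) ≤ 1 / s := by
        rw [div_mul_div_comm, div_le_div_iff₀ (by positivity) (by positivity), hbx]
        have q : N * (2 * x + N + 1) ^ 2 ≤ 4 * x * (x + N + 1) ^ 2 := by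
          obtain ⟨u, hu⟩ : ∃ u, u = x - (N - 1) := ⟨_, rfl⟩
          obtain ⟨v, hv⟩ : ∃ v, v = N - 2 := ⟨_, rfl⟩
          have hu0 : 0 ≤ u := by linarith
          have hv0 : 0 ≤ v := by linarith
          have hx2 : x = u + v + 1 := by linarith
          have hN3 : N = v + 2 := by linarith
          rw [hx2, hN3, ← sub_nonneg]
          ring_nf
          positivity
        -- AM-GM: `N (2x+N+1) s ≤ (x+N+1)(s²+Nx)`
        have am : N * (2 * x + N + 1) * s ≤ (x + N + 1) * (s ^ 2 + N * x) := by
          have d4 : 0 ≤ (2 * (x + N + 1) * s - N * (2 * x + N + 1)) ^ 2 := sq_nonneg _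
          have q' := mul_le_mul_of_nonneg_left q hN0.le
          have : 0 ≤ 4 * (x + N + 1) *
              ((x + N + 1) * (s ^ 2 + N * x) - N * (2 * x + N + 1) * s) := by
            have id : 4 * (x + N + 1) *
                ((x + N + 1) * (s ^ 2 + N * x) - N * (2 * x + N + 1) * s) =
                (2 * (x + N + 1) * s - N * (2 * x + N + 1)) ^ 2 +
                (N * (4 * x * (x + N + 1) ^ 2) - N * (N * (2 * x + N + 1) ^ 2)) := by ring
            rw [id]
            exact add_nonneg d4 (sub_nonneg.2 q')
          have := nonneg_of_mul_nonneg_right this (by positivity)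
          linarith
        have := mul_le_mul_of_nonneg_left am hx0.le
        linarith
      have t2 : (2 * x + N + 1) / (x * (x + N + 1)) *
          (b * (x + N + 1 + s ^ 2) / (s ^ 2 * b' + b * b' + (s ^ 2) ^ 2)) ≤
          (2 * x + N + 1) / (x * (x + N + 1)) * (b / (s ^ 2 + b)) := by
        gcongr
      linarith

set_option maxHeartbeats 2000000 in
/-- bound on the first difference `|Δg_f n|` for the PBD(α;0,β,1) Stein solution. -/
theorem stmt_2
    (α β : ℝ) (hα : 0 < α) (hβ : 0 < β)
    (C : ℝ) (hC : 0 < C) (π : ℕ → ℝ)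
    (hπ : ∀ n : ℕ, π n =
      C * α ^ n / ∏ i ∈ Finset.range n, (β * ((i : ℝ) + 1) + ((i : ℝ) + 1) * (i : ℝ)))
    (hπ1 : ∑' n, π n = 1)
    (f : ℕ → ℝ) (hf : ∀ x y : ℕ, |f x - f y| ≤ |(x : ℝ) - (y : ℝ)|)
    (hfs : Summable fun n => |f n| * π n)
    (g : ℕ → ℝ) (hg0 : g 0 = g 1)
    (hg : ∀ n : ℕ, α * g (n + 1) - (β * (n : ℝ) + (n : ℝ) * ((n : ℝ) - 1)) * g n
      = f n - ∑' k, f k * π k)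
    :
    ∀ n : ℕ, |g (n + 1) - g n| ≤
      min (1 / (β + 1) + (α + 2) / (α * (α + 2) + 2 * β * (α + β + 1)))
        (1 / Real.sqrt α + 1 / α) := by
  intro n
  rcases n with _ | n
  · rw [zero_add, hg0, sub_self, abs_zero]
    apply le_min <;> positivity
  set μ := ∑' k, f k * π k with hμ
  obtain ⟨b, hb⟩ : ∃ b : ℕ → ℝ, ∀ k : ℕ, b k = β * (k : ℝ) + (k : ℝ) * ((k : ℝ) - 1) :=
    ⟨_, fun _ => rfl⟩
  have hprod : ∀ k : ℕ, 0 < ∏ i ∈ Finset.range k,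
      (β * ((i : ℝ) + 1) + ((i : ℝ) + 1) * (i : ℝ)) := fun k =>
    Finset.prod_pos fun i _ => by positivity
  have hp : ∀ k, 0 < π k := fun k => by
    rw [hπ]; have := hprod k; positivity
  have hbp : ∀ k, b (k + 1) * π (k + 1) = α * π k := fun k => by
    rw [hb, hπ, hπ, Finset.prod_range_succ]
    have h1 := (hprod k).ne'
    have h2 : (β * ((k : ℝ) + 1) + ((k : ℝ) + 1) * (k : ℝ)) ≠ 0 := by positivity
    push_cast
    rw [add_sub_cancel_right]
    field_simp
    ring
  have hs : Summable π := by
    by_contra h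
    rw [tsum_eq_zero_of_not_summable h] at hπ1
    exact zero_ne_one hπ1
  have hsb : Summable fun k => b k * π k := by
    rw [← summable_nat_add_iff 1]
    simp only [hbp]
    exact hs.mul_left α
  have hfp : Summable fun k => f k * π k := by
    apply Summable.of_norm
    convert hfs using 2 with k
    rw [Real.norm_eq_abs, abs_mul, abs_of_pos (hp k)]
  obtain ⟨φ, hφ⟩ : ∃ φ : ℕ → ℝ, ∀ k, φ k = f k - f (n + 1) := ⟨_, fun _ => rfl⟩
  have hφp : Summable fun k => φ k * π k := by
    simp only [hφ, sub_mul]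
    exact hfp.sub (hs.mul_left _)
  obtain ⟨L, hLd⟩ : ∃ L, L = ∑ i ∈ Finset.range (n + 1), φ i * π i := ⟨_, rfl⟩
  obtain ⟨R, hRd⟩ : ∃ R, R = ∑' i, φ (i + (n + 2)) * π (i + (n + 2)) := ⟨_, rfl⟩
  obtain ⟨F, hFd⟩ : ∃ F, F = ∑ i ∈ Finset.range (n + 1), π i := ⟨_, rfl⟩
  obtain ⟨T, hTd⟩ : ∃ T, T = ∑' i, π (i + (n + 2)) := ⟨_, rfl⟩
  have hsum : F + π (n + 1) + T = 1 := by
    rw [hFd, hTd, ← Finset.sum_range_succ, hs.sum_add_tsum_nat_add, hπ1]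
  have hLR : μ - f (n + 1) = L + R := by
    have e1 : ∑' k, φ k * π k = μ - f (n + 1) := by
      simp only [hφ, sub_mul]
      rw [hfp.tsum_sub (hs.mul_left _), tsum_mul_left, hπ1, mul_one]
    rw [← e1, ← hφp.sum_add_tsum_nat_add (n + 2), Finset.sum_range_succ, hLd, hRd, hφ (n + 1)]
    ring
  have hG : ∀ k, α * π k * g (k + 1) = ∑ i ∈ Finset.range (k + 1), (f i - μ) * π i := by
    intro k
    induction k with
    | zero =>
      have := hg 0
      simp only [Nat.cast_zero] at this
      rw [Finset.sum_range_one, ← this]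
      ring
    | succ k ih =>
      rw [Finset.sum_range_succ, ← ih, ← hg (k + 1), ← hbp k, hb]
      ring
  have hL1 : ∑ i ∈ Finset.range (n + 1), (f i - μ) * π i = L - F * (L + R) := by
    rw [← hLR, hLd, hFd, Finset.sum_mul, ← Finset.sum_sub_distrib]
    refine Finset.sum_congr rfl fun i _ => ?_
    rw [hφ]; ring
  have h1 : b (n + 1) * π (n + 1) * g (n + 1) = L - F * (L + R) := by
    rw [hbp, hG, hL1]
  have h2 : α * π (n + 1) * g (n + 2) = L - (F + π (n + 1)) * (L + R) := by
    rw [hG, Finset.sum_range_succ, hL1]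
    have : f (n + 1) - μ = -(L + R) := by linarith
    rw [this]; ring
  have hbsucc : b (n + 1) = ((n : ℝ) + 1) * (β + ((n : ℝ) + 1) - 1) := by
    rw [hb]; push_cast; ring
  have hbsucc2 : b (n + 2) = ((n : ℝ) + 1 + 1) * (β + ((n : ℝ) + 1)) := by
    rw [hb]; push_cast; ring
  -- lower part
  have hαF : α * F = ∑ i ∈ Finset.range (n + 2), b i * π i := by
    rw [Finset.sum_range_succ', hb 0, hFd, Finset.mul_sum]
    simp [hbp]
  have hL : |L| * (β + ((n : ℝ) + 1) - 1) ≤ b (n + 1) * (F + π (n + 1)) - α * F := by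
    rw [hαF, Finset.sum_range_succ, hFd, hLd]
    have e : b (n + 1) * (∑ i ∈ Finset.range (n + 1), π i + π (n + 1)) -
        (∑ i ∈ Finset.range (n + 1), b i * π i + b (n + 1) * π (n + 1)) =
        ∑ i ∈ Finset.range (n + 1), (b (n + 1) - b i) * π i := by
      simp only [sub_mul, Finset.sum_sub_distrib, ← Finset.mul_sum]
      ring
    rw [e]
    have hx0 : 0 ≤ β + ((n : ℝ) + 1) - 1 := by
      have : (0 : ℝ) ≤ n := n.cast_nonneg
      linarith
    calc _ ≤ (∑ i ∈ Finset.range (n + 1), |φ i * π i|) * (β + ((n : ℝ) + 1) - 1) := by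
          gcongr
          exact Finset.abs_sum_le_sum_abs _ _
      _ = ∑ i ∈ Finset.range (n + 1), |φ i * π i| * (β + ((n : ℝ) + 1) - 1) := by
          rw [Finset.sum_mul]
      _ ≤ _ := by
          refine Finset.sum_le_sum fun i hi => ?_
          have hi' : (i : ℝ) ≤ n := by
            have := Finset.mem_range.1 hi
            exact_mod_cast Nat.lt_succ_iff.1 this
          have hi0 : (0 : ℝ) ≤ i := i.cast_nonneg
          have hfi : |φ i| ≤ (n : ℝ) + 1 - i := by
            rw [hφ]
            refine (hf _ _).trans ?_
            rw [abs_sub_comm, abs_of_nonneg] <;> push_cast <;> linarith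
          rw [abs_mul, abs_of_pos (hp i), mul_right_comm]
          refine mul_le_mul_of_nonneg_right ?_ (hp i).le
          refine (mul_le_mul_of_nonneg_right hfi hx0).trans ?_
          rw [hb, hb]; push_cast
          nlinarith [mul_nonneg hi0 (by linarith : (0 : ℝ) ≤ n + 1 - i)]
  -- upper part
  have hsT : Summable fun i => π (i + (n + 2)) := (summable_nat_add_iff (n + 2)).2 hs
  have hsbT : Summable fun i => b (i + (n + 2)) * π (i + (n + 2)) :=
    (summable_nat_add_iff (n + 2)).2 hsb
  have hsφT : Summable fun i => φ (i + (n + 2)) * π (i + (n + 2)) :=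
    (summable_nat_add_iff (n + 2)).2 hφp
  have hαT : α * (T + π (n + 1)) = ∑' i, b (i + (n + 2)) * π (i + (n + 2)) := by
    have e : ∀ i, b (i + (n + 2)) * π (i + (n + 2)) = α * π (i + (n + 1)) := fun i =>
      hbp (i + (n + 1))
    simp only [e]
    rw [tsum_mul_left, ((summable_nat_add_iff (n + 1)).2 hs).tsum_eq_zero_add, hTd, zero_add]
    rw [add_comm]
    congr 3
    ext i
    congr 1
    ring
  have hR : |R| * (β + 2 * ((n : ℝ) + 1)) ≤ α * (T + π (n + 1)) - b (n + 1) * T := by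
    rw [hαT, hTd, ← tsum_mul_left, ← hsbT.tsum_sub (hsT.mul_left _), hRd]
    have hd0 : 0 ≤ β + 2 * ((n : ℝ) + 1) := by positivity
    calc _ ≤ (∑' i, |φ (i + (n + 2)) * π (i + (n + 2))|) * (β + 2 * ((n : ℝ) + 1)) := by
          gcongr
          have := norm_tsum_le_tsum_norm hsφT.norm
          simpa only [Real.norm_eq_abs] using this
      _ = ∑' i, |φ (i + (n + 2)) * π (i + (n + 2))| * (β + 2 * ((n : ℝ) + 1)) := by
          rw [tsum_mul_right]
      _ ≤ _ := by
          refine Summable.tsum_le_tsum (fun i => ?_) (hsφT.abs.mul_right _)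
            (hsbT.sub (hsT.mul_left _))
          have hi0 : (0 : ℝ) ≤ i := i.cast_nonneg
          have hfi : |φ (i + (n + 2))| ≤ (i : ℝ) + 1 := by
            rw [hφ]
            refine (hf _ _).trans ?_
            rw [abs_of_nonneg] <;> push_cast <;> linarith
          rw [abs_mul, abs_of_pos (hp _), mul_right_comm, ← sub_mul]
          refine mul_le_mul_of_nonneg_right ?_ (hp _).le
          refine (mul_le_mul_of_nonneg_right hfi hd0).trans ?_
          rw [hb, hb]; push_cast
          nlinarith [mul_nonneg hi0 (by linarith : (0 : ℝ) ≤ i + 1)]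
  have hF : b (n + 1) * π (n + 1) ≤ α * F := by
    rw [hbp, hFd]
    refine mul_le_mul_of_nonneg_left ?_ hα.le
    exact Finset.single_le_sum (fun i _ => (hp i).le) (Finset.self_mem_range_succ n)
  have hn0 : (0 : ℝ) ≤ n := n.cast_nonneg
  have hx0 : 0 < β + ((n : ℝ) + 1) - 1 := by linarith
  have hb1 : 0 < b (n + 1) := by rw [hbsucc]; positivity
  have hb2 : 0 < b (n + 2) := by rw [hbsucc2]; positivity
  have hbb : b (n + 1) < b (n + 2) := by rw [hbsucc, hbsucc2]; nlinarith
  have hT : α * π (n + 1) ≤ b (n + 2) * T := by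
    rw [← hbp (n + 1), hTd]
    refine mul_le_mul_of_nonneg_left ?_ hb2.le
    have := hsT.le_tsum 0 (fun i _ => (hp _).le)
    simpa using this
  refine (pbd_core α (b (n + 1)) (b (n + 2)) (β + ((n : ℝ) + 1) - 1) (β + 2 * ((n : ℝ) + 1))
    (π (n + 1)) F T L R (g (n + 1)) (g (n + 2)) hα hb1 hb2 hx0 (by positivity) (hp _) hbb hsum
    h1 h2 hL hR hF hT).trans ?_
  exact pbd_final α β hα hβ n ((n : ℝ) + 1) _ _ rfl hbsucc hbsucc2
end

section
/- For every 1-Lipschitz function f : ℤ₊ → ℝ and every n ∈ ℤ₊, the second difference of the Stein solution satisfies |Δ²g_f(n)| ≤ 2/α + 1/(α + β(1 + β + α/2)), and in particular |Δ²g_f(n)| ≤ 3/α. -/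
open Filter Topology

lemma pbd_conv_mul (x0 x1 x2 y0 y1 y2 : ℝ) (hx2 : 0 ≤ x2) (hx12 : x2 ≤ x1) (hx01 : x1 ≤ x0)
    (hx : 0 ≤ x2 - 2 * x1 + x0) (hy2 : 0 ≤ y2) (hy12 : y2 ≤ y1) (hy01 : y1 ≤ y0)
    (hy : 0 ≤ y2 - 2 * y1 + y0) : 0 ≤ x2 * y2 - 2 * (x1 * y1) + x0 * y0 := by
  have h1 := mul_nonneg (sub_nonneg.2 hx12) (sub_nonneg.2 hy12)
  have h2 := mul_nonneg hx (by linarith : 0 ≤ y0)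
  have h3 := mul_nonneg (by linarith : 0 ≤ 2 * x1 - x2) hy
  nlinarith

/-- truncated tail ratios are nonneg, antitone, convex -/
lemma pbd_U (α β : ℝ) (hα : 0 < α) (hβ : 0 < β) (U : ℕ → ℕ → ℝ) (h0 : ∀ n, U 0 n = 0)
    (hs : ∀ k n : ℕ, U (k + 1) n = (1 / ((n : ℝ) + 1) * (1 / (β + n))) * (1 + α * U k (n + 1))) :
    ∀ k n, 0 ≤ U k n ∧ U k (n + 1) ≤ U k n ∧ 0 ≤ U k (n + 2) - 2 * U k (n + 1) + U k n := by
  have inv3 : ∀ t : ℝ, 0 < t → 0 ≤ 1 / (t + 2) ∧ 1 / (t + 2) ≤ 1 / (t + 1) ∧ 1 / (t + 1) ≤ 1 / t ∧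
      0 ≤ 1 / (t + 2) - 2 * (1 / (t + 1)) + 1 / t := by
    intro t ht
    refine ⟨by positivity, by gcongr; norm_num, by gcongr; linarith, ?_⟩
    have : 1 / (t + 2) - 2 * (1 / (t + 1)) + 1 / t = 2 / (t * (t + 1) * (t + 2)) := by
      field_simp; ring
    rw [this]; positivity
  intro k
  induction k with
  | zero => intro n; simp [h0]
  | succ k ih =>
    intro n
    obtain ⟨p1, p2, p3, p4⟩ := inv3 ((n : ℝ) + 1) (by positivity)
    obtain ⟨q1, q2, q3, q4⟩ := inv3 (β + n) (by positivity)
    obtain ⟨r1, r2, r3⟩ := ih (n + 1)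
    obtain ⟨s1, s2, -⟩ := ih (n + 2)
    obtain ⟨t1, -, -⟩ := ih (n + 3)
    have e1 : U (k + 1) (n + 1) = (1 / ((n : ℝ) + 1 + 1) * (1 / (β + n + 1))) * (1 + α * U k (n + 2)) := by
      rw [hs]; push_cast; ring_nf
    have e2 : U (k + 1) (n + 2) = (1 / ((n : ℝ) + 1 + 2) * (1 / (β + n + 2))) * (1 + α * U k (n + 3)) := by
      rw [hs]; push_cast; ring_nf
    rw [hs k n, e1, e2]
    have c := pbd_conv_mul _ _ _ _ _ _ p1 p2 p3 p4 q1 q2 q3 q4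
    set A0 := 1 / ((n : ℝ) + 1)
    set A1 := 1 / ((n : ℝ) + 1 + 1)
    set A2 := 1 / ((n : ℝ) + 1 + 2)
    set B0 := 1 / (β + n)
    set B1 := 1 / (β + n + 1)
    set B2 := 1 / (β + n + 2)
    have m2 : 0 ≤ A2 * B2 := mul_nonneg p1 q1
    have m12 : A2 * B2 ≤ A1 * B1 := mul_le_mul p2 q2 q1 (p1.trans p2)
    have m01 : A1 * B1 ≤ A0 * B0 := mul_le_mul p3 q3 (q1.trans q2) (p1.trans (p2.trans p3))
    have y2 : 0 ≤ 1 + α * U k (n + 3) := by positivity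
    have y12 : 1 + α * U k (n + 3) ≤ 1 + α * U k (n + 2) := by gcongr
    have y01 : 1 + α * U k (n + 2) ≤ 1 + α * U k (n + 1) := by gcongr
    have yc : 0 ≤ (1 + α * U k (n + 3)) - 2 * (1 + α * U k (n + 2)) + (1 + α * U k (n + 1)) := by
      have := mul_nonneg hα.le r3
      have e : U k (n + 1 + 2) = U k (n + 3) := rfl
      have e' : U k (n + 1 + 1) = U k (n + 2) := rfl
      rw [e, e'] at this
      linarith
    refine ⟨mul_nonneg (m2.trans (m12.trans m01)) (y2.trans (y12.trans y01)),
      mul_le_mul m01 y01 (y2.trans y12) (m2.trans (m12.trans m01)), ?_⟩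
    exact pbd_conv_mul _ _ _ _ _ _ m2 m12 m01 c y2 y12 y01 yc

/-- facts on `u n = (1 - F n) / (α π n)` -/
lemma pbd_u (α β : ℝ) (hα : 0 < α) (hβ : 0 < β) (π : ℕ → ℝ) (hp : ∀ n, 0 < π n)
    (hrec : ∀ n : ℕ, π (n + 1) * (((n : ℝ) + 1) * (β + n)) = α * π n) (hsum : HasSum π 1)
    (F : ℕ → ℝ) (hF : ∀ n, F n = ∑ k ∈ Finset.range (n + 1), π k)
    (u : ℕ → ℝ) (hu : ∀ n, u n = (1 - F n) / (α * π n)) :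
    ∀ n, 0 ≤ u n ∧ u (n + 1) ≤ u n ∧ 0 ≤ u (n + 2) - 2 * u (n + 1) + u n := by
  set U : ℕ → ℕ → ℝ := fun k n => (F (n + k) - F n) / (α * π n) with hU
  have key := pbd_U α β hα hβ U (by intro n; simp [hU]) (by
    intro k n
    have h1 := hp n
    have h2 := hp (n + 1)
    have hr := hrec n
    have e : F (n + 1) = F n + π (n + 1) := by rw [hF, hF, Finset.sum_range_succ]
    have e3 : n + (k + 1) = n + 1 + k := by ring
    simp only [hU, e3]
    rw [← hr, e]
    have : 0 < β + n := by positivity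
    field_simp
    ring)
  have hlim : ∀ n, Tendsto (fun k => U k n) atTop (𝓝 (u n)) := by
    intro n
    have h := hsum.tendsto_sum_nat
    have h2 := h.comp (tendsto_add_atTop_nat (n + 1))
    have h3 := (h2.sub_const (F n)).div_const (α * π n)
    rw [hu]
    refine h3.congr ?_
    intro k
    simp only [hU, Function.comp, hF (n + k)]
    congr 3
    ring_nf
  intro n
  refine ⟨ge_of_tendsto' (hlim n) fun k => (key k n).1,
    le_of_tendsto_of_tendsto' (hlim _) (hlim _) fun k => (key k n).2.1,
    ge_of_tendsto' (((hlim _).sub ((hlim _).const_mul 2)).add (hlim _)) fun k => (key k n).2.2⟩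

lemma pbd_v (α β : ℝ) (hα : 0 < α) (hβ : 0 < β) (v : ℕ → ℝ) (h0 : v 0 = 1 / α)
    (hs : ∀ n : ℕ, α * v (n + 1) = 1 + ((n : ℝ) + 1) * (β + n) * v n) :
    ∀ n, 0 ≤ v n ∧ v n ≤ v (n + 1) ∧ 0 ≤ v (n + 2) - 2 * v (n + 1) + v n := by
  have hv : ∀ n, 0 ≤ v n := by
    intro n
    induction n with
    | zero => rw [h0]; positivity
    | succ n ih =>
      have : 0 ≤ α * v (n + 1) := by rw [hs]; positivity
      exact nonneg_of_mul_nonneg_right this hα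
  have hm : ∀ n, v n ≤ v (n + 1) := by
    intro n
    induction n with
    | zero =>
      have := hs 0
      refine le_of_mul_le_mul_left ?_ hα
      rw [this, h0]; norm_num
      field_simp
      linarith
    | succ n ih =>
      refine le_of_mul_le_mul_left ?_ hα
      rw [hs, hs]; push_cast
      have := hv n
      have := hv (n+1)
      gcongr <;> linarith
  intro n
  refine ⟨hv n, hm n, ?_⟩
  induction n with
  | zero =>
    have e1 := hs 0
    have e2 := hs 1
    have e0 : α * v 0 = 1 := by rw [h0]; field_simp
    have h1 := hm 0
    have h2 := hv 0
    simp only [Nat.cast_zero, Nat.cast_one, zero_add] at *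
    refine nonneg_of_mul_nonneg_right (a := α) ?_ hα
    nlinarith [mul_nonneg hβ.le (sub_nonneg.2 h1)]
  | succ n ih =>
    have e1 := hs n
    have e2 := hs (n + 1)
    have e3 := hs (n + 2)
    have h1 := hm n
    have h2 := hm (n + 1)
    have h0 := hv n
    have h3 := hv (n + 1)
    have h4 := hv (n + 2)
    push_cast at *
    have e : v (n + 1 + 2) = v (n + 2 + 1) := rfl
    have e' : v (n + 1 + 1) = v (n + 2) := rfl
    rw [e]
    rw [e'] at *
    refine nonneg_of_mul_nonneg_right (a := α) ?_ hα
    have hb : 0 ≤ ((n : ℝ) + 1) * (β + n) := by positivity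
    have k1 := mul_nonneg hb ih
    have k2 : 0 ≤ (β + 2 * n + 2) * (v (n + 2) - v (n + 1)) := mul_nonneg (by positivity) (by linarith)
    have k3 : 0 ≤ (β + 2 * n + 4) * (v (n + 2) - v (n + 1)) := mul_nonneg (by positivity) (by linarith)
    nlinarith

/-- maximum principle -/
lemma pbd_max (X b κ : ℕ → ℝ) (α : ℝ) (hα : 0 < α) (hX : Tendsto X atTop (𝓝 0))
    (hb : ∀ n, 0 ≤ b n) (hκ : ∀ n, 0 < κ n)
    (h : ∀ n, 0 ≤ α * (X (n + 1) - X n) - b n * (X n - X (n - 1)) - κ n * X n) : ∀ n, X n ≤ 0 := by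
  intro n0
  by_contra! hn
  obtain ⟨N, hN⟩ := (continuous_of_discreteTopology (f := X)).exists_forall_ge' n0 (by
    rw [cocompact_eq_cofinite, Nat.cofinite_eq_atTop]
    exact (hX.eventually (gt_mem_nhds hn)).mono fun x hx => le_of_lt hx)
  have h1 := h N
  have h2 : 0 < κ N * X N := mul_pos (hκ N) (hn.trans_le (hN n0))
  have h3 := mul_nonneg hα.le (sub_nonneg.2 (hN (N + 1)))
  have h4 := mul_nonneg (hb N) (sub_nonneg.2 (hN (N - 1)))
  linarith

/-- the solution for `-id` -/
lemma pbd_G (α β m : ℝ) (hα : 0 < α) (hβ : 0 < β) (G : ℕ → ℝ) (hlim : Tendsto G atTop (𝓝 0))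
    (h0 : α * G 0 = m)
    (hs : ∀ n : ℕ, α * G (n + 1) = ((n : ℝ) + 1) * (β + n) * G n + m - (n + 1)) :
    G 1 ≤ G 0 ∧ ∀ n, G (n + 2) - 2 * G (n + 1) + G n ≤ 1 / (α + β * (1 + β + α / 2)) := by
  have shift : ∀ X : ℕ → ℝ, Tendsto X atTop (𝓝 0) → Tendsto (fun n => X (n + 1) - X n) atTop (𝓝 0) := by
    intro X hX
    simpa using (hX.comp (tendsto_add_atTop_nat 1)).sub hX
  set b : ℕ → ℝ := fun n => (n : ℝ) * (β + n - 1) with hb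
  have hb0 : ∀ n, 0 ≤ b n := by
    intro n
    rcases n with _ | n
    · simp [hb]
    · simp only [hb]; push_cast
      have : β + ((n : ℝ) + 1) - 1 = β + n := by ring
      rw [this]; positivity
  set H : ℕ → ℝ := fun n => G (n + 1) - G n with hH
  set D : ℕ → ℝ := fun n => H (n + 1) - H n with hD
  set E : ℕ → ℝ := fun n => D (n + 1) - D n with hE
  have lH := shift G hlim
  have lD := shift H lH
  have lE := shift D lD
  have eG : ∀ n, α * (G (n + 1) - G n) - b n * (G n - G (n - 1)) - (β + 2 * n) * G n = -1 := by
    intro n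
    rcases n with _ | n
    · have := hs 0
      simp [hb] at *
      linarith
    · have e1 := hs n
      have e2 := hs (n + 1)
      simp only [hb, Nat.add_sub_cancel]
      push_cast at *
      linear_combination e2 - e1
  have eH : ∀ n, α * (H (n + 1) - H n) - b n * (H n - H (n - 1)) - (2 * β + 4 * n + 2) * H n = 2 * G n := by
    intro n
    rcases n with _ | n
    · have e1 := eG 0
      have e2 := eG 1
      simp [hb, hH] at *
      linarith
    · have e1 := eG (n + 1)
      have e2 := eG (n + 2)
      have k1 : n + 2 - 1 = n + 1 := rfl
      simp only [hb, hH, Nat.add_sub_cancel, k1] at *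
      push_cast at *
      linear_combination e2 - e1
  have eD : ∀ n, α * (D (n + 1) - D n) - b n * (D n - D (n - 1)) - (3 * β + 6 * n + 6) * D n = 6 * H n := by
    intro n
    rcases n with _ | n
    · have e1 := eH 0
      have e2 := eH 1
      simp [hb, hD] at e1 e2 ⊢
      simp only [hH] at *
      linarith
    · have e1 := eH (n + 1)
      have e2 := eH (n + 2)
      have k1 : n + 2 - 1 = n + 1 := rfl
      simp only [hb, hD, hH, Nat.add_sub_cancel, k1] at *
      push_cast at *
      linear_combination e2 - e1
  have eE : ∀ n, α * (E (n + 1) - E n) - b n * (E n - E (n - 1)) - (4 * β + 8 * n + 12) * E n = 12 * D n := by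
    intro n
    rcases n with _ | n
    · have e1 := eD 0
      have e2 := eD 1
      simp [hb, hE] at e1 e2 ⊢
      simp only [hD, hH] at *
      linarith
    · have e1 := eD (n + 1)
      have e2 := eD (n + 2)
      have k1 : n + 2 - 1 = n + 1 := rfl
      simp only [hb, hE, hD, hH, Nat.add_sub_cancel, k1] at *
      push_cast at *
      linear_combination e2 - e1
  have sG : ∀ n, 0 ≤ G n := by
    have := pbd_max (fun n => - G n) b (fun n => β + 2 * n) α hα (by simpa using hlim.neg) hb0
      (fun n => by positivity) (fun n => by have := eG n; linarith)
    intro n; have := this n; linarith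
  have sH : ∀ n, H n ≤ 0 :=
    pbd_max H b (fun n => 2 * β + 4 * n + 2) α hα lH hb0
      (fun n => by positivity) (fun n => by have := eH n; have := sG n; linarith)
  have sD : ∀ n, 0 ≤ D n := by
    have := pbd_max (fun n => - D n) b (fun n => 3 * β + 6 * n + 6) α hα (by have := lD.neg; rw [neg_zero] at this; exact this) hb0
      (fun n => by positivity) (fun n => by have := eD n; have := sH n; linarith)
    intro n; have := this n; linarith
  have sE : ∀ n, E n ≤ 0 :=
    pbd_max E b (fun n => 4 * β + 8 * n + 12) α hα lE hb0
      (fun n => by positivity) (fun n => by have := eE n; have := sD n; linarith)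
  have hD0 : ∀ n, D n ≤ D 0 := by
    have : Antitone D := antitone_nat_of_succ_le fun n => by have := sE n; simp only [hE] at this; linarith
    exact fun n => this (Nat.zero_le n)
  have fin : D 0 ≤ 1 / (α + β * (1 + β + α / 2)) := by
    have e1 := eG 0
    have e2 := eH 0
    have e3 := eD 0
    have e4 := sE 0
    have e5 := sD 0
    have b0 : b 0 = 0 := by simp [hb]
    have H0 : G (0 + 1) - G 0 = H 0 := rfl
    have D0 : H (0 + 1) - H 0 = D 0 := rfl
    have E0 : D (0 + 1) - D 0 = E 0 := rfl
    rw [b0, H0] at e1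
    rw [b0, D0] at e2
    rw [b0, E0] at e3
    simp only [Nat.cast_zero, zero_mul, mul_zero, add_zero, sub_zero] at e1 e2 e3
    rw [le_div_iff₀ (by positivity)]
    have k1 : D 0 ≤ - H 0 := by nlinarith
    have k2 : α * β * D 0 + 2 * (α + β * (β + 1)) * (- H 0) = 2 := by
      linear_combination β * e2 - 2 * e1
    have k3 := mul_le_mul_of_nonneg_left k1 (by positivity : 0 ≤ 2 * (α + β * (β + 1)))
    nlinarith
  refine ⟨by have := sH 0; simp only [hH] at this; linarith, fun n => ?_⟩
  have := (hD0 n).trans fin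
  simp only [hD, hH] at this
  have e : G (n + 1 + 1) = G (n + 2) := rfl
  rw [e] at this
  linarith

/-- one-sided bound for monotone test functions -/
lemma pbd_mono (α β : ℝ) (hα : 0 < α) (hβ : 0 < β) (π : ℕ → ℝ) (hp : ∀ n, 0 < π n)
    (hrec : ∀ n : ℕ, π (n + 1) * (((n : ℝ) + 1) * (β + n)) = α * π n) (hsum : HasSum π 1)
    (φ : ℕ → ℝ) (μ : ℝ) (hφ : Monotone φ) (hμ : HasSum (fun k => φ k * π k) μ)
    (γ : ℕ → ℝ) (h0 : α * γ 0 = φ 0 - μ)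
    (hs : ∀ n : ℕ, α * γ (n + 1) = ((n : ℝ) + 1) * (β + n) * γ n + φ (n + 1) - μ) :
    φ 0 ≤ μ ∧ ∀ n, γ (n + 2) - 2 * γ (n + 1) + γ n ≤ (φ (n + 2) - φ (n + 1)) / α := by
  set F : ℕ → ℝ := fun n => ∑ k ∈ Finset.range (n + 1), π k with hF
  set u : ℕ → ℝ := fun n => (1 - F n) / (α * π n) with hu
  set v : ℕ → ℝ := fun n => F n / (α * π n) with hv
  have Fs : ∀ n, F (n + 1) = F n + π (n + 1) := fun n => by simp only [hF]; rw [Finset.sum_range_succ]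
  have F0 : F 0 = π 0 := by simp [hF]
  have Fpos : ∀ n, 0 ≤ F n := fun n => Finset.sum_nonneg fun i _ => (hp i).le
  have cu := pbd_u α β hα hβ π hp hrec hsum F (fun n => rfl) u (fun n => rfl)
  have cv := pbd_v α β hα hβ v (by
      have := hp 0
      simp only [hv, F0]; field_simp) (by
      intro n
      have h1 := hp n
      have h2 := hp (n + 1)
      simp only [hv]
      rw [Fs, ← hrec n]
      have : 0 < β + n := by positivity
      field_simp
      ring)
  set A : ℕ → ℝ := fun n => ∑ j ∈ Finset.range n, (φ (j + 1) - φ j) * F j with hA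
  have As : ∀ n, A (n + 1) = A n + (φ (n + 1) - φ n) * F n := fun n => by
    simp only [hA]; rw [Finset.sum_range_succ]
  have Apos : ∀ n, 0 ≤ A n := fun n => Finset.sum_nonneg fun i _ =>
    mul_nonneg (sub_nonneg.2 (hφ (Nat.le_succ i))) (Fpos i)
  have hAsum : ∀ n, ∑ k ∈ Finset.range (n + 1), φ k * π k = φ n * F n - A n := by
    intro n
    induction n with
    | zero => simp [hA, F0]
    | succ n ih => rw [Finset.sum_range_succ, ih, As, Fs]; ring
  have Bpos : ∀ n, 0 ≤ μ - φ n + A n := by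
    intro n
    have t1 := (hasSum_nat_add_iff' (n + 1)).2 hμ
    have t2 := ((hasSum_nat_add_iff' (n + 1)).2 hsum).mul_left (φ n)
    have t3 := hasSum_le (fun k => mul_le_mul_of_nonneg_right (hφ (by omega : n ≤ k + (n + 1)))
      (hp (k + (n + 1))).le) t2 t1
    rw [hAsum] at t3
    have : ∑ k ∈ Finset.range (n + 1), π k = F n := rfl
    rw [this] at t3
    linarith
  have hγ : ∀ n, α * π n * γ n = F n * (φ n - μ) - A n := by
    intro n
    induction n with
    | zero => rw [F0]; simp only [hA, Finset.range_zero, Finset.sum_empty]; linear_combination π 0 * h0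
    | succ n ih =>
      rw [Fs, As]
      linear_combination ih + π (n + 1) * hs n + γ n * hrec n
  refine ⟨by have := Bpos 0; simp [hA] at this; linarith, fun n => ?_⟩
  have p0 := hp n
  have p1 := hp (n + 1)
  have p2 := hp (n + 2)
  have f1 : F (n + 2) = F (n + 1) + π (n + 2) := Fs (n + 1)
  have a1 : A (n + 2) = A (n + 1) + (φ (n + 2) - φ (n + 1)) * F (n + 1) := As (n + 1)
  have g0 : γ n = -(u n * A (n + 1) + v n * (μ - φ (n + 1) + A (n + 1))) := by
    have := hγ n
    rw [As]
    simp only [hu, hv]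
    field_simp
    linear_combination this
  have g1 : γ (n + 1) = -(u (n + 1) * A (n + 1) + v (n + 1) * (μ - φ (n + 1) + A (n + 1))) := by
    have := hγ (n + 1)
    simp only [hu, hv]
    field_simp
    linear_combination this
  have g2 : γ (n + 2) = -(u (n + 2) * A (n + 1) + v (n + 2) * (μ - φ (n + 1) + A (n + 1)))
      + (φ (n + 2) - φ (n + 1)) / α := by
    have := hγ (n + 2)
    rw [a1] at this
    simp only [hu, hv]
    rw [f1] at *
    field_simp
    linear_combination this
  rw [g0, g1, g2]
  have q1 := mul_nonneg (Apos (n + 1)) (cu n).2.2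
  have q2 := mul_nonneg (Bpos (n + 1)) (cv n).2.2
  nlinarith

/-- bounded solution of the recursion tends to zero -/
lemma pbd_lim (α β m : ℝ) (hα : 0 < α) (hβ : 0 < β) (G : ℕ → ℝ) (K : ℝ) (hK : ∀ n, |G n| ≤ K)
    (hs : ∀ n : ℕ, α * G (n + 1) = ((n : ℝ) + 1) * (β + n) * G n + m - (n + 1)) :
    Tendsto G atTop (𝓝 0) := by
  have e : ∀ n : ℕ, |G n| ≤ (α * K + |m| + 1) * (1 / (β + n)) := by
    intro n
    have hb : 0 < β + n := by positivity
    rw [mul_one_div, le_div_iff₀ hb]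
    have h1 : ((n : ℝ) + 1) * (|G n| * (β + n)) = |α * G (n + 1) - m + (n + 1)| := by
      have : α * G (n + 1) - m + (n + 1) = ((n : ℝ) + 1) * (β + n) * G n := by rw [hs]; ring
      rw [this, abs_mul, abs_of_pos (by positivity : 0 < ((n : ℝ) + 1) * (β + n))]; ring
    have h2 : |α * G (n + 1) - m + (n + 1)| ≤ α * K + |m| + (n + 1) := by
      have := abs_add_three (α * G (n + 1)) (-m) ((n : ℝ) + 1)
      rw [abs_mul, abs_of_pos hα, abs_neg, abs_of_pos (by positivity : 0 < (n : ℝ) + 1)] at this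
      have h3 := mul_le_mul_of_nonneg_left (hK (n + 1)) hα.le
      have : α * G (n + 1) - m + (n + 1) = α * G (n + 1) + -m + (n + 1) := by ring
      rw [this]; linarith
    have h4 : 0 ≤ α * K + |m| := by
      have := (abs_nonneg _).trans (hK 0); positivity
    have hn : (0 : ℝ) ≤ n := by positivity
    refine le_of_mul_le_mul_left (a := (n : ℝ) + 1) ?_ (by positivity)
    rw [h1]
    nlinarith
  refine squeeze_zero_norm e ?_
  have : Tendsto (fun n : ℕ => 1 / (β + (n : ℝ))) atTop (𝓝 0) := by
    simp only [one_div]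
    exact tendsto_inv_atTop_zero.comp (tendsto_atTop_add_const_left _ _ tendsto_natCast_atTop_atTop)
  simpa using this.const_mul (α * K + |m| + 1)

lemma pbd_mean_summable (α β : ℝ) (hα : 0 < α) (hβ : 0 < β) (π : ℕ → ℝ) (hp : ∀ n, 0 < π n)
    (hrec : ∀ n : ℕ, π (n + 1) * (((n : ℝ) + 1) * (β + n)) = α * π n) :
    ∀ n : ℕ, ((n : ℝ) + 1) * π (n + 1) ≤ α / β * π n := by
  intro n
  rw [div_mul_eq_mul_div, le_div_iff₀ hβ, ← hrec n]
  have := hp (n + 1)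
  have : 0 ≤ ((n : ℝ) + 1) * π (n + 1) * n := by positivity
  nlinarith

/-- existence of the solution for `-id` -/
lemma pbd_exists (α β : ℝ) (hα : 0 < α) (hβ : 0 < β) (π : ℕ → ℝ) (hp : ∀ n, 0 < π n)
    (hrec : ∀ n : ℕ, π (n + 1) * (((n : ℝ) + 1) * (β + n)) = α * π n) (hsum : HasSum π 1) :
    ∃ m : ℝ, ∃ G : ℕ → ℝ, HasSum (fun k : ℕ => (k : ℝ) * π k) m ∧ Tendsto G atTop (𝓝 0) ∧
      α * G 0 = m ∧
      ∀ n : ℕ, α * G (n + 1) = ((n : ℝ) + 1) * (β + n) * G n + m - (n + 1) := by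
  have hk := pbd_mean_summable α β hα hβ π hp hrec
  have hsm : Summable (fun k : ℕ => (k : ℝ) * π k) := by
    rw [← summable_nat_add_iff 1]
    refine Summable.of_nonneg_of_le (fun k => ?_) (fun k => ?_) (hsum.summable.mul_left (α / β))
    · have := hp (k + 1); positivity
    · push_cast; exact hk k
  obtain ⟨m, hm⟩ := hsm
  have hm0 : 0 ≤ m := hm.nonneg fun k => mul_nonneg (by positivity) (hp k).le
  set F : ℕ → ℝ := fun n => ∑ k ∈ Finset.range (n + 1), π k with hF
  set u : ℕ → ℝ := fun n => (1 - F n) / (α * π n) with hu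
  have cu := pbd_u α β hα hβ π hp hrec hsum F (fun n => rfl) u (fun n => rfl)
  have hu0 : ∀ n, u n ≤ u 0 := fun n =>
    (antitone_nat_of_succ_le fun n => (cu n).2.1) (Nat.zero_le n)
  set M : ℕ → ℝ := fun n => ∑ k ∈ Finset.range (n + 1), (k : ℝ) * π k with hM
  set G : ℕ → ℝ := fun n => (m * F n - M n) / (α * π n) with hG
  have hs : ∀ n : ℕ, α * G (n + 1) = ((n : ℝ) + 1) * (β + n) * G n + m - (n + 1) := by
    intro n
    have h1 := hp n
    have h2 := hp (n + 1)
    have e1 : F (n + 1) = F n + π (n + 1) := by simp only [hF]; rw [Finset.sum_range_succ]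
    have e2 : M (n + 1) = M n + ((n : ℝ) + 1) * π (n + 1) := by
      simp only [hM]; rw [Finset.sum_range_succ]; push_cast; rfl
    simp only [hG]
    rw [e1, e2, ← hrec n]
    have : 0 < β + n := by positivity
    field_simp
    ring
  refine ⟨m, G, hm, ?_, ?_, hs⟩
  · refine pbd_lim α β m hα hβ G (m * u 0 + (α / β * (1 / α + u 0))) ?_ hs
    intro n
    have h1 := hp n
    have w0 : 0 ≤ u 0 := (cu 0).1
    have t1 := (hasSum_nat_add_iff' (n + 1)).2 hm
    have t2 := (hasSum_nat_add_iff' (n + 1)).2 hsum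
    have t3 := ((hasSum_nat_add_iff' n).2 hsum).mul_left (α / β)
    have l1 : 0 ≤ m - M n := t1.nonneg fun k => mul_nonneg (by positivity) (hp _).le
    have l2 : m - M n ≤ α / β * (1 - F n + π n) := by
      have := hasSum_le (fun k => by have := hk (k + n); push_cast at this ⊢; rw [← add_assoc, ← add_assoc]; exact this) t1 t3
      have e : F n = ∑ k ∈ Finset.range n, π k + π n := by simp only [hF]; rw [Finset.sum_range_succ]
      rw [e]
      calc _ ≤ _ := this
        _ = _ := by ring
    have eG : G n = (m - M n) / (α * π n) - m * u n := by
      simp only [hG, hu]; field_simp; ring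
    have l3 : (m - M n) / (α * π n) ≤ α / β * (1 / α + u n) := by
      rw [div_le_iff₀ (by positivity)]
      refine l2.trans (le_of_eq ?_)
      simp only [hu]; field_simp; ring
    have l4 : 0 ≤ (m - M n) / (α * π n) := by positivity
    have l5 : α / β * (1 / α + u n) ≤ α / β * (1 / α + u 0) := by gcongr; exact hu0 n
    have l6 : m * u n ≤ m * u 0 := by gcongr; exact hu0 n
    have l7 : 0 ≤ m * u n := mul_nonneg hm0 (cu n).1
    rw [eG, abs_le]
    constructor <;> linarith
  · have := hp 0
    simp only [hG, hF, hM]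
    simp
    field_simp


/-- bound on the second difference `|Δ²g_f n|` for the PBD(α;0,β,1) Stein solution. -/
theorem stmt_3
    (α β : ℝ) (hα : 0 < α) (hβ : 0 < β)
    (C : ℝ) (hC : 0 < C) (π : ℕ → ℝ)
    (hπ : ∀ n : ℕ, π n =
      C * α ^ n / ∏ i ∈ Finset.range n, (β * ((i : ℝ) + 1) + ((i : ℝ) + 1) * (i : ℝ)))
    (hπ1 : ∑' n, π n = 1)
    (f : ℕ → ℝ) (hf : ∀ x y : ℕ, |f x - f y| ≤ |(x : ℝ) - (y : ℝ)|)
    (hfs : Summable fun n => |f n| * π n)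
    (g : ℕ → ℝ) (hg0 : g 0 = g 1)
    (hg : ∀ n : ℕ, α * g (n + 1) - (β * (n : ℝ) + (n : ℝ) * ((n : ℝ) - 1)) * g n
      = f n - ∑' k, f k * π k)
    :
    ∀ n : ℕ, |g (n + 2) - 2 * g (n + 1) + g n| ≤ 2 / α + 1 / (α + β * (1 + β + α / 2)) ∧
      |g (n + 2) - 2 * g (n + 1) + g n| ≤ 3 / α := by
  have hp : ∀ n, 0 < π n := by
    intro n
    rw [hπ]
    refine div_pos (by positivity) (Finset.prod_pos fun i _ => by positivity)
  have hrec : ∀ n : ℕ, π (n + 1) * (((n : ℝ) + 1) * (β + n)) = α * π n := by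
    intro n
    rw [hπ, hπ, Finset.prod_range_succ]
    have h1 : (∏ i ∈ Finset.range n, (β * ((i : ℝ) + 1) + ((i : ℝ) + 1) * (i : ℝ))) ≠ 0 :=
      (Finset.prod_pos fun i _ => by positivity).ne'
    have h2 : β * ((n : ℝ) + 1) + ((n : ℝ) + 1) * (n : ℝ) = ((n : ℝ) + 1) * (β + n) := by ring
    have h3 : 0 < β + n := by positivity
    rw [h2]
    field_simp
    ring
  have hsum : HasSum π 1 := by
    have : Summable π := by
      by_contra h
      rw [tsum_eq_zero_of_not_summable h] at hπ1
      exact zero_ne_one hπ1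
    rw [← hπ1]; exact this.hasSum
  obtain ⟨m, G, hm, hlim, hG0, hGs⟩ := pbd_exists α β hα hβ π hp hrec hsum
  obtain ⟨hG1, hGb⟩ := pbd_G α β m hα hβ G hlim hG0 hGs
  have hfsum : Summable fun k => f k * π k := by
    refine Summable.of_norm (hfs.congr fun k => ?_)
    rw [norm_mul, Real.norm_eq_abs, Real.norm_of_nonneg (hp k).le]
  have hμ := hfsum.hasSum
  set μ := ∑' k, f k * π k
  have g1 : α * g 1 = f 0 - μ := by have := hg 0; simpa using this
  have gs : ∀ n : ℕ, α * g (n + 2) = ((n : ℝ) + 1) * (β + n) * g (n + 1) + f (n + 1) - μ := by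
    intro n
    have := hg (n + 1)
    push_cast at this
    linear_combination this
  have hstep : ∀ n : ℕ, |f (n + 1) - f n| ≤ 1 := by
    intro n; have := hf (n + 1) n; push_cast at this; simpa using this
  have P := pbd_mono α β hα hβ π hp hrec hsum (fun n => n + f n) (m + μ)
    (monotone_nat_of_le_succ fun n => by
      have := (abs_le.1 (hstep n)).1; push_cast; linarith)
    (by simpa only [add_mul] using hm.add hμ) (fun n => - G n + g (n + 1))
    (by simp only [Nat.cast_zero, zero_add]; linarith)
    (fun n => by have := hGs n; have := gs n; push_cast; simp only [add_assoc] at *; norm_num at *; linarith)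
  have Q := pbd_mono α β hα hβ π hp hrec hsum (fun n => n - f n) (m - μ)
    (monotone_nat_of_le_succ fun n => by
      have := (abs_le.1 (hstep n)).2; push_cast; linarith)
    (by simpa only [sub_mul] using hm.sub hμ) (fun n => - G n - g (n + 1))
    (by simp only [Nat.cast_zero, zero_add]; linarith)
    (fun n => by have := hGs n; have := gs n; push_cast; simp only [add_assoc] at *; norm_num at *; linarith)
  have main : ∀ n : ℕ, |g (n + 2) - 2 * g (n + 1) + g n| ≤ 2 / α + 1 / (α + β * (1 + β + α / 2)) := by
    intro n
    rcases n with _ | n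
    · have e0 := gs 0
      have e1 := hGs 0
      have hmα : β * G 0 ≤ 1 := by
        simp only [Nat.cast_zero, zero_add, add_zero, one_mul] at e1
        nlinarith
      have k : |g 1| ≤ G 0 := by
        have p := P.1
        have q := Q.1
        simp only [Nat.cast_zero] at p q
        rw [abs_le]
        constructor <;> refine le_of_mul_le_mul_left ?_ hα <;> linarith
      have k2 := abs_le.1 k
      have s := abs_le.1 (hstep 0)
      simp only [Nat.cast_zero, zero_add, add_zero, one_mul] at e0 s
      have e : g (0 + 2) - 2 * g (0 + 1) + g 0 = (f 1 - f 0 + β * g 1) / α := by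
        rw [eq_div_iff hα.ne', hg0]; simp only [zero_add]; linarith
      have hpos : 0 ≤ 1 / (α + β * (1 + β + α / 2)) := by positivity
      have : |g (0 + 2) - 2 * g (0 + 1) + g 0| ≤ 2 / α := by
        rw [e, abs_div, abs_of_pos hα]
        gcongr
        have t1 := mul_le_mul_of_nonneg_left k2.1 hβ.le
        have t2 := mul_le_mul_of_nonneg_left k2.2 hβ.le
        rw [abs_le]; constructor <;> linarith
      linarith
    · have p := P.2 n
      have q := Q.2 n
      have r := hGb n
      have s := abs_le.1 (hstep (n + 1))
      have e2 : f (n + 1 + 1) = f (n + 2) := rfl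
      rw [e2] at s
      push_cast at p q
      have p' : ((n : ℝ) + 2 + f (n + 2) - (n + 1 + f (n + 1))) / α ≤ 2 / α := by
        gcongr; linarith
      have q' : ((n : ℝ) + 2 - f (n + 2) - (n + 1 - f (n + 1))) / α ≤ 2 / α := by
        gcongr; linarith
      have c1 : g (n + 1 + 2) = g (n + 2 + 1) := rfl
      have c2 : g (n + 1 + 1) = g (n + 2) := rfl
      rw [c2] at *
      rw [c1, abs_le]
      constructor <;> linarith
  intro n
  refine ⟨main n, (main n).trans ?_⟩
  have : 1 / (α + β * (1 + β + α / 2)) ≤ 1 / α := by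
    gcongr
    have : 0 ≤ β * (1 + β + α / 2) := by positivity
    linarith
  have e : 3 / α = 2 / α + 1 / α := by ring
  rw [e]; linarith
end

section
/- For every 1-Lipschitz function f : ℤ₊ → ℝ and every n ∈ ℤ₊, the first difference of the Stein solution satisfies |Δg̃_f(n)| ≤ min( 1/(1+b) + (a + 2b)/(a² + 2a + 2 + 2b(a+1)), 1/√(ab) + 1/a ). -/
/-- Monotonicity estimate for the product of the two Stein factors. -/
lemma aux_K (a d d' p F G α β : ℝ) (ha : 0 < a) (hd : 0 < d) (hd' : 0 < d')
    (hp : 0 < p) (hF : p ≤ F) (hG : a * p * (d' + a) / (d * d') ≤ G) (hFG : F + G = 1)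
    (hα : α = (d - a) * F + a * p) (hβ : β = a * p - (d - a) * G)
    (hβ0 : 0 ≤ β) :
    α * β ≤ a ^ 2 * p * (d * (d' - d + a) / (d * d' + a * d' + a ^ 2)) := by
  set g0 := a * p * (d' + a) / (d * d') with hg0
  have hg0p : 0 < g0 := by positivity
  have hGp : 0 < G := lt_of_lt_of_le hg0p hG
  have h1 : α * (p + G) ≤ p * d := by
    have : α * (p + G) = p * d * (F + G) - (F - p) * β := by rw [hα, hβ]; ring
    rw [this, hFG]
    nlinarith [mul_nonneg (sub_nonneg.2 hF) hβ0]
  have h2 : β * (p + g0) ≤ (a * p - (d - a) * g0) * (p + G) := by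
    have : β * (p + g0) = (a * p - (d - a) * g0) * (p + G) - (G - g0) * (p * d) := by
      rw [hβ]; ring
    rw [this]
    nlinarith [mul_nonneg (sub_nonneg.2 hG) (mul_pos hp hd).le]
  have h3 : p * d * (a * p - (d - a) * g0) =
      a ^ 2 * p * (d * (d' - d + a) / (d * d' + a * d' + a ^ 2)) * (p + g0) := by
    rw [hg0]
    have : d * d' + a * d' + a ^ 2 ≠ 0 := by positivity
    field_simp
    ring
  have h4 : α * β * (p + G) * (p + g0) ≤
      a ^ 2 * p * (d * (d' - d + a) / (d * d' + a * d' + a ^ 2)) * (p + G) * (p + g0) := by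
    calc α * β * (p + G) * (p + g0) = (α * (p + G)) * (β * (p + g0)) := by ring
      _ ≤ (p * d) * (β * (p + g0)) := by
        apply mul_le_mul_of_nonneg_right h1; positivity
      _ ≤ (p * d) * ((a * p - (d - a) * g0) * (p + G)) := by
        apply mul_le_mul_of_nonneg_left h2; positivity
      _ = (p * d * (a * p - (d - a) * g0)) * (p + G) := by ring
      _ = _ := by rw [h3]; ring
  have h5 := le_of_mul_le_mul_right h4 (by positivity)
  exact le_of_mul_le_mul_right h5 (by positivity)

/-- First bound. -/
lemma aux_first (a b : ℝ) (ha : 0 < a) (hb : 0 < b) (m : ℕ) (c e d d' : ℝ)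
    (hc : c = 1 + b * m) (he : e = 1 + 2 * b * (m + 1)) (hd : d = (m + 1) * c)
    (hd' : d' = d + e) :
    d * (d' - d + a) / (d * d' + a * d' + a ^ 2) * (1 / c + 1 / e) ≤
      1 / (1 + b) + (a + 2 * b) / (a ^ 2 + 2 * a + 2 + 2 * b * (a + 1)) := by
  have hm : (0 : ℝ) ≤ m := Nat.cast_nonneg m
  have hcp : 0 < c := by rw [hc]; positivity
  have hep : 0 < e := by rw [he]; positivity
  have hdp : 0 < d := by rw [hd]; positivity
  have hd'p : 0 < d' := by rw [hd']; positivity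
  have hce : c ≤ e := by rw [hc, he]; nlinarith [mul_nonneg hb.le hm]
  rcases Nat.eq_zero_or_pos m with h0 | h0
  · subst h0
    simp only [Nat.cast_zero] at *
    have hc1 : c = 1 := by rw [hc]; ring
    have hd1 : d = 1 := by rw [hd, hc1]; ring
    have he1 : e = 1 + 2 * b := by rw [he]; ring
    have hd1' : d' = 2 + 2 * b := by rw [hd', hd1, he1]; ring
    rw [hc1, hd1, he1, hd1']
    have hD : (1 * (2 + 2 * b) + a * (2 + 2 * b) + a ^ 2) = a ^ 2 + 2 * a + 2 + 2 * b * (a + 1) := by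
      ring
    rw [hD]
    set D := a ^ 2 + 2 * a + 2 + 2 * b * (a + 1) with hDd
    have hDp : 0 < D := by positivity
    have key : 1 / D + (a + 1 + 2 * b) / (D * (1 + 2 * b)) ≤ 1 / (1 + b) := by
      rw [div_add_div _ _ hDp.ne' (by positivity), div_le_div_iff₀ (by positivity) (by positivity)]
      have : (1 + b) * (1 * (1 + 2 * b) + (a + 1 + 2 * b)) ≤ D * (1 + 2 * b) := by
        rw [hDd]
        nlinarith [mul_pos ha hb, mul_pos (mul_pos ha hb) hb, sq_nonneg a, mul_nonneg hb.le (sq_nonneg a)]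
      nlinarith [mul_le_mul_of_nonneg_left this hDp.le]
    have : 1 * (2 + 2 * b - 1 + a) / D * (1 / 1 + 1 / (1 + 2 * b)) =
        (1 / D + (a + 1 + 2 * b) / (D * (1 + 2 * b))) + (a + 2 * b) / D := by
      field_simp
      ring
    rw [this]
    linarith
  · have hm1 : (1 : ℝ) ≤ m := by exact_mod_cast h0
    have hK : d * (d' - d + a) / (d * d' + a * d' + a ^ 2) ≤ e / (e + c) := by
      rw [div_le_div_iff₀ (by positivity) (by positivity)]
      have hq : 0 ≤ e * a ^ 2 + a * (e ^ 2 - (m + 1) * c ^ 2) + e * c ^ 2 * ((m + 1) * m) := by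
        have h1 : (m + 1) * c ^ 2 * a ≤ e * ((m + 1) * c * a) := by
          have : 0 ≤ (m + 1) * c * a := by positivity
          nlinarith [mul_le_mul_of_nonneg_right hce this]
        have h2 : 0 ≤ a ^ 2 - (m + 1) * c * a + c ^ 2 * ((m + 1) * m) := by
          have : a ^ 2 - (m + 1) * c * a + c ^ 2 * ((m + 1) * m) =
            (a - (m + 1) * c / 2) ^ 2 + c ^ 2 * (m + 1) * (3 * m - 1) / 4 := by ring
          rw [this]
          have : (0 : ℝ) ≤ 3 * m - 1 := by linarith
          positivity
        nlinarith [mul_nonneg hep.le h2, mul_nonneg ha.le (sq_nonneg e)]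
      have : e * (d * d' + a * d' + a ^ 2) - d * (d' - d + a) * (e + c) =
          e * a ^ 2 + a * (e ^ 2 - (m + 1) * c ^ 2) + e * c ^ 2 * ((m + 1) * m) := by
        rw [hd', hd]; ring
      linarith
    have h1 : d * (d' - d + a) / (d * d' + a * d' + a ^ 2) * (1 / c + 1 / e) ≤ 1 / c := by
      calc _ ≤ e / (e + c) * (1 / c + 1 / e) := by
            apply mul_le_mul_of_nonneg_right hK; positivity
        _ = 1 / c := by field_simp
    have h2 : 1 / c ≤ 1 / (1 + b) := by
      apply one_div_le_one_div_of_le (by positivity)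
      rw [hc]; nlinarith
    have h3 : 0 ≤ (a + 2 * b) / (a ^ 2 + 2 * a + 2 + 2 * b * (a + 1)) := by positivity
    linarith

/-- Polynomial inequality used in the second bound. -/
lemma aux_poly (u m : ℝ) (hup : 0 < u) (hm1 : 1 ≤ m) :
    0 ≤ u * (u - m) ^ 2 + m * u + m ^ 2 - u ^ 2 := by
  rcases le_total u m with h | h
  · have h1 : 0 ≤ u * (u - m) ^ 2 := by positivity
    nlinarith [mul_le_mul_of_nonneg_right h hup.le, sq_nonneg m]
  · obtain ⟨w, hw⟩ : ∃ w, w = u - m := ⟨_, rfl⟩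
    have hw0 : 0 ≤ w := by linarith
    have huw : u = m + w := by linarith
    have h0 : u * (u - m) ^ 2 + m * u + m ^ 2 - u ^ 2 =
        (m - 1) * w ^ 2 + (w ^ 3 + m ^ 2 - m * w) := by rw [huw]; ring
    rw [h0]
    have h7 : 0 ≤ (m - 1) * w ^ 2 := mul_nonneg (by linarith) (sq_nonneg _)
    have h8 : 0 ≤ w ^ 3 + m ^ 2 - m * w := by
      rcases le_total w m with h | h
      · have h9 : 0 ≤ w ^ 3 := by positivity
        have h10 : m * w ≤ m * m := mul_le_mul_of_nonneg_left h (by linarith)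
        linarith [sq m]
      · have h9 : 0 ≤ w ^ 2 * (w - m) := mul_nonneg (sq_nonneg _) (by linarith)
        have h10 : 0 ≤ m * w * (w - 1) :=
          mul_nonneg (mul_nonneg (by linarith) hw0) (by linarith)
        have h11 : w ^ 3 + m ^ 2 - m * w = w ^ 2 * (w - m) + m * w * (w - 1) + m ^ 2 := by ring
        rw [h11]
        positivity
    linarith

/-- Second bound. -/
lemma aux_second (a b : ℝ) (ha : 0 < a) (hb : 0 < b) (m : ℕ) (c e d d' : ℝ)
    (hc : c = 1 + b * m) (he : e = 1 + 2 * b * (m + 1)) (hd : d = (m + 1) * c)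
    (hd' : d' = d + e) :
    d * (d' - d + a) / (d * d' + a * d' + a ^ 2) * (1 / c + 1 / e) ≤
      1 / Real.sqrt (a * b) + 1 / a := by
  have hm : (0 : ℝ) ≤ m := Nat.cast_nonneg m
  have hcp : 0 < c := by rw [hc]; positivity
  have hep : 0 < e := by rw [he]; positivity
  have hdp : 0 < d := by rw [hd]; positivity
  have hd'p : 0 < d' := by rw [hd']; positivity
  have hce : c ≤ e := by rw [hc, he]; nlinarith [mul_nonneg hb.le hm]
  have h1 : d * (d' - d + a) / (d * d' + a * d' + a ^ 2) * (1 / c + 1 / e) ≤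
      (m + 1) * (1 + c / e) / (d + a) := by
    have hK : d * (d' - d + a) / (d * d' + a * d' + a ^ 2) ≤ d / (d + a) := by
      rw [div_le_div_iff₀ (by positivity) (by positivity)]
      have : d * (d * d' + a * d' + a ^ 2) - d * (d' - d + a) * (d + a) = d ^ 3 := by
        rw [hd']; ring
      nlinarith [pow_pos hdp 3]
    calc _ ≤ d / (d + a) * (1 / c + 1 / e) := by
          apply mul_le_mul_of_nonneg_right hK; positivity
      _ = _ := by
          have : d + a ≠ 0 := by positivity
          have hd2 : d * (1 / c + 1 / e) = (m + 1) * (1 + c / e) := by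
            rw [hd]; field_simp
          rw [div_mul_eq_mul_div, hd2]
  refine h1.trans ?_
  rw [div_le_iff₀ (by positivity)]
  set s := Real.sqrt (a * b) with hs
  have hsp : 0 < s := Real.sqrt_pos.2 (by positivity)
  have hs2 : s ^ 2 = a * b := Real.sq_sqrt (by positivity)
  obtain ⟨u, hu⟩ : ∃ u, u = a / s := ⟨_, rfl⟩
  have hup : 0 < u := by rw [hu]; positivity
  have hsu : 1 / s = u / a := by rw [hu]; field_simp
  have hbu : b = a / u ^ 2 := by
    rw [hu, div_pow, hs2]; field_simp
  rw [hsu]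
  rcases Nat.eq_zero_or_pos m with h0 | h0
  · subst h0
    simp only [Nat.cast_zero] at *
    have hc1 : c = 1 := by rw [hc]; ring
    have hd1 : d = 1 := by rw [hd, hc1]; ring
    have he1 : e = 1 + 2 * b := by rw [he]; ring
    rw [hd1, hc1]
    have : 1 / e ≤ (u * (1 + a) + 1) / a := by
      rw [div_le_div_iff₀ hep ha]
      rcases le_total u 1 with h | h
      · have : a ≤ b := by
          rw [hbu, le_div_iff₀ (by positivity)]
          have : u ^ 2 ≤ 1 := pow_le_one₀ hup.le h
          exact mul_le_of_le_one_right ha.le this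
        have : 0 < u * (1 + a) := by positivity
        nlinarith
      · have h1e : 1 ≤ e := by rw [he1]; linarith
        have hx : a ≤ u * (1 + a) + 1 := by
          have := mul_le_mul_of_nonneg_right h (by linarith : (0 : ℝ) ≤ 1 + a)
          linarith
        have hy := mul_le_mul hx h1e zero_le_one (by positivity)
        linarith
    have h2 : (u / a + 1 / a) * (1 + a) = (u * (1 + a) + 1) / a + 1 := by
      field_simp; ring
    rw [h2]; linarith
  · have hm1 : (1 : ℝ) ≤ m := by exact_mod_cast h0
    have hce1 : c / e ≤ 1 := (div_le_one hep).2 hce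
    have h2 : (m + 1) * (1 + c / e) ≤ 2 * ((m : ℝ) + 1) := by nlinarith
    refine h2.trans ?_
    have h3 : a + b * m ^ 2 + b * m ≤ d + a := by rw [hd, hc]; nlinarith
    have h4 : (u / a + 1 / a) * (a + b * m ^ 2 + b * m) ≤ (u / a + 1 / a) * (d + a) := by
      apply mul_le_mul_of_nonneg_left h3; positivity
    refine le_trans ?_ h4
    have h5 : (u / a + 1 / a) * (a + b * m ^ 2 + b * m) =
        (u + 1) * (u ^ 2 + m ^ 2 + m) / u ^ 2 := by
      rw [hbu]; field_simp; try ring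
    rw [h5, le_div_iff₀ (by positivity)]
    have h6 := aux_poly u m hup hm1
    nlinarith [mul_nonneg hm hup.le]

set_option maxHeartbeats 1000000 in
/-- bound on the first difference `|Δg̃_f n|` for the PBD(a;0,1,b) Stein solution. -/
theorem stmt_5
    (a b : ℝ) (ha : 0 < a) (hb : 0 < b)
    (C : ℝ) (hC : 0 < C) (π : ℕ → ℝ)
    (hπ : ∀ n : ℕ, π n =
      C * a ^ n / ∏ i ∈ Finset.range n, (((i : ℝ) + 1) + b * ((i : ℝ) + 1) * (i : ℝ)))
    (hπ1 : ∑' n, π n = 1)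
    (f : ℕ → ℝ) (hf : ∀ x y : ℕ, |f x - f y| ≤ |(x : ℝ) - (y : ℝ)|)
    (hfs : Summable fun n => |f n| * π n)
    (g : ℕ → ℝ) (hg0 : g 0 = g 1)
    (hg : ∀ n : ℕ, a * g (n + 1) - ((n : ℝ) + b * (n : ℝ) * ((n : ℝ) - 1)) * g n
      = f n - ∑' k, f k * π k)
    :
    ∀ n : ℕ, |g (n + 1) - g n| ≤
      min (1 / (1 + b) + (a + 2 * b) / (a ^ 2 + 2 * a + 2 + 2 * b * (a + 1)))
        (1 / Real.sqrt (a * b) + 1 / a) := by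
  intro n
  rcases n with _ | m
  · rw [zero_add, hg0, sub_self, abs_zero]
    apply le_min <;> positivity
  have hpos : ∀ k, 0 < π k := by
    intro k
    rw [hπ]
    apply div_pos (by positivity)
    apply Finset.prod_pos
    intro i _
    positivity
  have hsum : Summable π := by
    by_contra h
    rw [tsum_eq_zero_of_not_summable h] at hπ1
    exact zero_ne_one hπ1
  have hrec : ∀ k : ℕ, (((k : ℝ) + 1) * (1 + b * k)) * π (k + 1) = a * π k := by
    intro k
    rw [hπ, hπ, Finset.prod_range_succ]
    have h1 : (∏ i ∈ Finset.range k, (((i : ℝ) + 1) + b * ((i : ℝ) + 1) * (i : ℝ))) ≠ 0 := by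
      apply ne_of_gt
      apply Finset.prod_pos
      intro i _
      positivity
    have h2 : (k : ℝ) + 1 + b * (k + 1) * k ≠ 0 := by positivity
    field_simp
    ring
  have hfs' : Summable fun k => f k * π k := by
    refine Summable.of_abs (hfs.congr fun k => ?_)
    rw [abs_mul, abs_of_pos (hpos k)]
  set μ := ∑' k, f k * π k with hμ
  -- partial sums
  have hH : ∀ k : ℕ, a * π k * g (k + 1) = ∑ i ∈ Finset.range (k + 1), π i * (f i - μ) := by
    intro k
    induction k with
    | zero =>
      have := hg 0
      simp at this
      simp
      rw [← this]; ring
    | succ k ih =>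
      rw [Finset.sum_range_succ, ← ih, ← hg (k + 1), ← hrec k]
      push_cast
      ring
  obtain ⟨c, hc⟩ : ∃ c, c = 1 + b * m := ⟨_, rfl⟩
  obtain ⟨e, he⟩ : ∃ e, e = 1 + 2 * b * (m + 1) := ⟨_, rfl⟩
  obtain ⟨d, hd⟩ : ∃ d, d = (m + 1) * c := ⟨_, rfl⟩
  obtain ⟨d', hd'⟩ : ∃ d', d' = d + e := ⟨_, rfl⟩
  have hm : (0 : ℝ) ≤ m := Nat.cast_nonneg m
  have hcp : 0 < c := by rw [hc]; positivity
  have hep : 0 < e := by rw [he]; positivity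
  have hdp : 0 < d := by rw [hd]; positivity
  have hd'p : 0 < d' := by rw [hd']; positivity
  obtain ⟨p, hp⟩ : ∃ p, p = π m := ⟨_, rfl⟩
  have hpp : 0 < p := hp ▸ hpos m
  have hp1 : d * π (m + 1) = a * p := by rw [hp, ← hrec m, hd, hc]
  have hp2 : d' * π (m + 2) = a * π (m + 1) := by
    rw [← hrec (m + 1), hd', hd, hc, he]; push_cast; ring
  set ψ : ℕ → ℝ := fun k => f k - f (m + 1) with hψ
  have hψs : Summable fun k => π k * ψ k := by
    have := hfs'.sub (hsum.mul_left (f (m + 1)))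
    refine this.congr fun k => ?_
    simp only [hψ]; ring
  obtain ⟨F, hF⟩ : ∃ F, F = ∑ k ∈ Finset.range (m + 1), π k := ⟨_, rfl⟩
  obtain ⟨G, hG⟩ : ∃ G, G = ∑' i, π (i + (m + 1)) := ⟨_, rfl⟩
  obtain ⟨L, hL⟩ : ∃ L, L = ∑ k ∈ Finset.range (m + 1), π k * ψ k := ⟨_, rfl⟩
  obtain ⟨R, hR⟩ : ∃ R, R = ∑' i, π (i + (m + 1)) * ψ (i + (m + 1)) := ⟨_, rfl⟩
  have hFG : F + G = 1 := by
    rw [hF, hG, hsum.sum_add_tsum_nat_add, hπ1]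
  have hLR : L + R = μ - f (m + 1) := by
    rw [hL, hR, hψs.sum_add_tsum_nat_add (m + 1)]
    have h1 : ∀ k, π k * ψ k = f k * π k - f (m + 1) * π k := by
      intro k; simp only [hψ]; ring
    simp_rw [h1]
    rw [hfs'.tsum_sub (hsum.mul_left _), tsum_mul_left, hπ1, mul_one]
  have hgm : a * p * g (m + 1) = L * G - R * F := by
    rw [hp, hH m]
    have h1 : ∀ i, π i * (f i - μ) = π i * ψ i - (L + R) * π i := by
      intro i; rw [hLR]; simp only [hψ]; ring
    simp_rw [h1]
    rw [Finset.sum_sub_distrib, ← Finset.mul_sum, ← hL, ← hF]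
    have : G = 1 - F := by linarith
    rw [this]; ring
  obtain ⟨Dl, hDl⟩ : ∃ Dl, Dl = g (m + 1 + 1) - g (m + 1) := ⟨_, rfl⟩
  have hDl1 : a * Dl = -(L + R) + (d - a) * g (m + 1) := by
    have := hg (m + 1)
    rw [hDl, hLR, hd, hc]
    push_cast at this
    linear_combination this
  obtain ⟨α, hα⟩ : ∃ α, α = (d - a) * F + a * p := ⟨_, rfl⟩
  obtain ⟨β, hβ⟩ : ∃ β, β = a * p - (d - a) * G := ⟨_, rfl⟩
  have hDl2 : a ^ 2 * p * Dl = -(L * β) - R * α := by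
    have h1 : G = 1 - F := by linarith
    have : a ^ 2 * p * Dl = a * p * (a * Dl) := by ring
    rw [this, hDl1]
    have : a * p * (-(L + R) + (d - a) * g (m + 1)) =
      -(a * p) * (L + R) + (d - a) * (a * p * g (m + 1)) := by ring
    rw [this, hgm, hα, hβ]
    ring
  -- left part
  have hLb : c * |L| ≤ α := by
    have hdk : ∀ N : ℕ, ∑ k ∈ Finset.range (N + 1), ((k : ℝ) + b * k * (k - 1)) * π k
        = a * ∑ k ∈ Finset.range N, π k := by
      intro N
      rw [Finset.sum_range_succ', Finset.mul_sum]
      simp only [Nat.cast_zero, mul_zero, zero_mul, add_zero]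
      apply Finset.sum_congr rfl
      intro k _
      rw [← hrec k]; push_cast; ring
    have hαs : α = ∑ k ∈ Finset.range (m + 1), (d - ((k : ℝ) + b * k * (k - 1))) * π k := by
      simp_rw [sub_mul]
      rw [Finset.sum_sub_distrib, hdk m, ← Finset.mul_sum, ← hF]
      have : ∑ k ∈ Finset.range m, π k = F - p := by
        rw [hF, Finset.sum_range_succ, hp]; ring
      rw [this, hα]; ring
    rw [hαs, hL]
    calc c * |∑ k ∈ Finset.range (m + 1), π k * ψ k|
        ≤ c * ∑ k ∈ Finset.range (m + 1), |π k * ψ k| := by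
          apply mul_le_mul_of_nonneg_left (Finset.abs_sum_le_sum_abs _ _) hcp.le
      _ = ∑ k ∈ Finset.range (m + 1), c * |π k * ψ k| := by rw [Finset.mul_sum]
      _ ≤ _ := by
          apply Finset.sum_le_sum
          intro k hk
          have hk1 : (k : ℝ) ≤ m := by
            have := Finset.mem_range.1 hk
            exact_mod_cast Nat.lt_succ_iff.1 this
          have hk0 : (0 : ℝ) ≤ k := Nat.cast_nonneg k
          have h1 : |ψ k| ≤ m + 1 - k := by
            have := hf k (m + 1)
            rw [abs_sub_comm (k : ℝ)] at this
            push_cast at this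
            rwa [abs_of_nonneg (by linarith : (0 : ℝ) ≤ m + 1 - k)] at this
          rw [abs_mul, abs_of_pos (hpos k)]
          have h2 : c * (m + 1 - k) ≤ d - ((k : ℝ) + b * k * (k - 1)) := by
            have : d - ((k : ℝ) + b * k * (k - 1)) - c * (m + 1 - k) = b * k * (m + 1 - k) := by
              rw [hd, hc]; ring
            have h3 : 0 ≤ b * k * (m + 1 - k) :=
              mul_nonneg (by positivity) (by linarith)
            linarith
          have h3 : c * |ψ k| ≤ d - ((k : ℝ) + b * k * (k - 1)) :=
            (mul_le_mul_of_nonneg_left h1 hcp.le).trans h2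
          nlinarith [mul_le_mul_of_nonneg_right h3 (hpos k).le]
  -- right part
  have hshift : Summable fun i => π (i + (m + 1)) := (summable_nat_add_iff (m + 1)).2 hsum
  have hshift0 : Summable fun i => π (i + m) := (summable_nat_add_iff m).2 hsum
  have hG0 : ∑' i, π (i + m) = p + G := by
    rw [hshift0.tsum_eq_zero_add, hp, hG]
    simp only [zero_add]
    congr 1
    apply tsum_congr
    intro i
    congr 1
    ring
  have hRb : e * |R| ≤ β := by
    have hβs : HasSum (fun i => a * π (i + m) - d * π (i + (m + 1))) β := by
      have := (hshift0.hasSum.mul_left a).sub (hshift.hasSum.mul_left d)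
      rw [hG0, ← hG] at this
      have hβ2 : β = a * (p + G) - d * G := by rw [hβ]; ring
      rw [hβ2]; exact this
    have hterm : ∀ i : ℕ, e * |π (i + (m + 1)) * ψ (i + (m + 1))| ≤
        a * π (i + m) - d * π (i + (m + 1)) := by
      intro i
      rw [← hrec (i + m), abs_mul, abs_of_pos (hpos _)]
      have h1 : |ψ (i + (m + 1))| ≤ i := by
        have := hf (i + (m + 1)) (m + 1)
        push_cast at this
        rwa [add_sub_cancel_right (i : ℝ), abs_of_nonneg (Nat.cast_nonneg i : (0 : ℝ) ≤ i)] at this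
      have hi0 : (0 : ℝ) ≤ i := Nat.cast_nonneg i
      have hii : (i : ℝ) ≤ i * i := by
        rcases Nat.eq_zero_or_pos i with h | h
        · simp [h]
        · have : (1 : ℝ) ≤ i := by exact_mod_cast h
          exact le_mul_of_one_le_left hi0 this
      have h2 : e * i ≤ ((((i + m : ℕ) : ℝ) + 1) * (1 + b * ((i + m : ℕ) : ℝ))) - d := by
        have : ((((i + m : ℕ) : ℝ) + 1) * (1 + b * ((i + m : ℕ) : ℝ))) - d - e * i
            = b * (i * i - i) := by
          rw [hd, hc, he]; push_cast; ring
        have : 0 ≤ b * ((i : ℝ) * i - i) := mul_nonneg hb.le (by linarith)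
        linarith
      have h3 := (mul_le_mul_of_nonneg_left h1 hep.le).trans h2
      have h4 := mul_le_mul_of_nonneg_right h3 (hpos (i + (m + 1))).le
      have h5 : i + m + 1 = i + (m + 1) := by ring
      rw [h5]
      linarith
    have hs1 : Summable fun i => e * |π (i + (m + 1)) * ψ (i + (m + 1))| :=
      Summable.of_nonneg_of_le (fun i => by positivity) hterm hβs.summable
    have hs2 : Summable fun i => |π (i + (m + 1)) * ψ (i + (m + 1))| := by
      have := hs1.mul_left e⁻¹
      refine this.congr fun i => ?_
      field_simp
    have h1 : |R| ≤ ∑' i, |π (i + (m + 1)) * ψ (i + (m + 1))| := by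
      rw [hR]
      have := norm_tsum_le_tsum_norm (f := fun i => π (i + (m + 1)) * ψ (i + (m + 1))) hs2
      simpa only [Real.norm_eq_abs] using this
    calc e * |R| ≤ e * ∑' i, |π (i + (m + 1)) * ψ (i + (m + 1))| :=
          mul_le_mul_of_nonneg_left h1 hep.le
      _ = ∑' i, e * |π (i + (m + 1)) * ψ (i + (m + 1))| := by rw [tsum_mul_left]
      _ ≤ ∑' i, (a * π (i + m) - d * π (i + (m + 1))) := hs1.tsum_le_tsum hterm hβs.summable
      _ = β := hβs.tsum_eq
  have hα0 : 0 ≤ α := le_trans (by positivity) hLb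
  have hβ0 : 0 ≤ β := le_trans (by positivity) hRb
  have hFp : p ≤ F := by
    rw [hF, Finset.sum_range_succ, hp]
    have : 0 ≤ ∑ k ∈ Finset.range m, π k := Finset.sum_nonneg fun i _ => (hpos i).le
    linarith
  have hGp : a * p * (d' + a) / (d * d') ≤ G := by
    have h1 := hshift.sum_le_tsum (Finset.range 2) (fun i _ => (hpos _).le)
    rw [← hG, Finset.sum_range_succ, Finset.sum_range_one] at h1
    have e1 : 0 + (m + 1) = m + 1 := by ring
    have e2 : 1 + (m + 1) = m + 2 := by ring
    rw [e1, e2] at h1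
    have e3 : π (m + 1) = a * p / d := by rw [← hp1]; field_simp
    have e4 : π (m + 2) = a * (a * p / d) / d' := by rw [← e3, ← hp2]; field_simp
    rw [e3, e4] at h1
    refine le_trans (le_of_eq ?_) h1
    field_simp
  have hK := aux_K a d d' p F G α β ha hdp hd'p hpp hFp hGp hFG hα hβ hβ0
  have hfin : |Dl| ≤ d * (d' - d + a) / (d * d' + a * d' + a ^ 2) * (1 / c + 1 / e) := by
    have h1 : |L| ≤ α / c := by rw [le_div_iff₀ hcp]; linarith
    have h2 : |R| ≤ β / e := by rw [le_div_iff₀ hep]; linarith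
    have h3 : a ^ 2 * p * |Dl| ≤ |L| * β + |R| * α := by
      have : a ^ 2 * p * |Dl| = |a ^ 2 * p * Dl| := by
        rw [abs_mul, abs_of_pos (by positivity : 0 < a ^ 2 * p)]
      rw [this, hDl2]
      calc |-(L * β) - R * α| ≤ |-(L * β)| + |R * α| := abs_sub _ _
        _ = _ := by rw [abs_neg, abs_mul, abs_mul, abs_of_nonneg hα0, abs_of_nonneg hβ0]
    have h4 : |L| * β + |R| * α ≤ α * β * (1 / c + 1 / e) := by
      have := mul_le_mul_of_nonneg_right h1 hβ0
      have := mul_le_mul_of_nonneg_right h2 hα0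
      have : α * β * (1 / c + 1 / e) = α / c * β + β / e * α := by ring
      linarith
    have h5 := mul_le_mul_of_nonneg_right hK (by positivity : 0 ≤ 1 / c + 1 / e)
    refine le_of_mul_le_mul_left ?_ (by positivity : 0 < a ^ 2 * p)
    linarith
  rw [← hDl]
  exact le_min (hfin.trans (aux_first a b ha hb m c e d d' hc he hd hd'))
    (hfin.trans (aux_second a b ha hb m c e d d' hc he hd hd'))
end

section
/- For every 1-Lipschitz function f : ℤ₊ → ℝ and every n ∈ ℤ₊, the second difference of the Stein solution satisfies |Δ²g̃_f(n)| ≤ 2/a + b/((a+1)b + 1 + a/2). -/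
lemma my_hasSum_congr {f g : ℕ → ℝ} {c : ℝ} (h : ∀ k, f k = g k) (hg : HasSum g c) :
    HasSum f c := by
  rw [funext h]
  exact hg

lemma prod_convex {A0 A1 A2 B0 B1 B2 : ℝ} (hA0 : 0 ≤ A0) (hA : A1 ≤ A0) (hA2 : 0 ≤ A0 - 2 * A1 + A2)
    (hB2 : 0 ≤ B2) (hB : B2 ≤ B1) (hBc : 0 ≤ B0 - 2 * B1 + B2) :
    0 ≤ A0 * B0 - 2 * (A1 * B1) + A2 * B2 := by
  have h1 := mul_nonneg hA0 hBc
  have h2 := mul_nonneg (sub_nonneg.2 hA) (sub_nonneg.2 hB)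
  have h3 := mul_nonneg hA2 hB2
  nlinarith

lemma inv_convex {x t : ℝ} (hx : 0 < x) (ht : 0 ≤ t) :
    x⁻¹ - 2 * (x + t)⁻¹ + (x + 2 * t)⁻¹ = 2 * t ^ 2 / (x * (x + t) * (x + 2 * t)) := by
  have h1 : 0 < x + t := by linarith
  have h2 : 0 < x + 2 * t := by linarith
  field_simp
  ring

lemma inv_convex_nonneg {x t : ℝ} (hx : 0 < x) (ht : 0 ≤ t) :
    0 ≤ x⁻¹ - 2 * (x + t)⁻¹ + (x + 2 * t)⁻¹ := by
  rw [inv_convex hx ht]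
  positivity

/-- `u n = U (n+1)` is convex. -/
lemma convU {a b : ℝ} (ha : 0 < a) (hb : 0 < b) (u : ℕ → ℝ) (hu0 : a * u 0 = 1)
    (hu : ∀ n : ℕ, a * u (n + 1) = ((n : ℝ) + 1) * (1 + b * n) * u n + 1) (n : ℕ) :
    0 ≤ u n ∧ 0 ≤ u (n + 1) - u n ∧ 0 ≤ u (n + 2) - 2 * u (n + 1) + u n := by
  induction n with
  | zero =>
    have h1 := hu 0
    have h2 := hu 1
    norm_num at h1 h2 ⊢
    have p0 : 0 < u 0 := by
      by_contra h
      push Not at h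
      nlinarith
    have p1 : u 0 ≤ u 1 := by
      have : a * u 0 ≤ a * u 1 := by linarith
      exact le_of_mul_le_mul_left this ha
    refine ⟨p0.le, p1, ?_⟩
    have : 0 ≤ a * (u 2 - 2 * u 1 + u 0) := by
      have : 0 ≤ b * u 1 := by nlinarith
      nlinarith
    exact nonneg_of_mul_nonneg_right this ha
  | succ n ih =>
    obtain ⟨i1, i2, i3⟩ := ih
    have h1 := hu n
    have h2 := hu (n + 1)
    have h3 := hu (n + 2)
    push_cast at h1 h2 h3
    have hn : (0 : ℝ) ≤ n := Nat.cast_nonneg n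
    refine ⟨by linarith, by linarith, ?_⟩
    have e : a * (u (n + 3) - 2 * u (n + 2) + u (n + 1)) =
        ((n : ℝ) + 1) * (1 + b * n) * (u (n + 2) - 2 * u (n + 1) + u n)
        + (2 * (1 + 2 * b * (n + 1)) ) * (u (n + 2) - 2 * u (n + 1) + u n)
        + (2 * (1 + 2 * b * (n + 1)) ) * (u (n + 1) - u n)
        + 2 * b * u (n + 2) := by
      have : a * (u (n + 3) - 2 * u (n + 2) + u (n + 1)) = a * u (n + 2 + 1)
        - 2 * (a * u (n + 1 + 1)) + a * u (n + 1) := by ring_nf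
      rw [this, h1, h2, h3]
      ring_nf
    have q : 0 ≤ u (n + 2) := by linarith
    have : 0 ≤ a * (u (n + 3) - 2 * u (n + 2) + u (n + 1)) := by
      rw [e]; positivity
    exact nonneg_of_mul_nonneg_right this ha

lemma rconv {b : ℝ} (hb : 0 < b) (n : ℕ) :
    (((n : ℝ) + 2) * (1 + b * (n + 1)))⁻¹ ≤ (((n : ℝ) + 1) * (1 + b * n))⁻¹ ∧
    0 ≤ (((n : ℝ) + 1) * (1 + b * n))⁻¹ - 2 * (((n : ℝ) + 2) * (1 + b * (n + 1)))⁻¹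
      + (((n : ℝ) + 3) * (1 + b * (n + 2)))⁻¹ := by
  have hn : (0 : ℝ) ≤ n := Nat.cast_nonneg n
  constructor
  · gcongr <;> linarith
  · simp only [mul_inv]
    apply prod_convex
    · positivity
    · gcongr; norm_num
    · have := inv_convex_nonneg (x := (n : ℝ) + 1) (t := 1) (by positivity) (by norm_num)
      ring_nf at this ⊢
      linarith
    · positivity
    · gcongr; norm_num
    · have := inv_convex_nonneg (x := 1 + b * (n : ℝ)) (t := b) (by positivity) hb.le
      ring_nf at this ⊢
      linarith

lemma convVk {a b : ℝ} (ha : 0 < a) (hb : 0 < b) (w : ℕ → ℕ → ℝ) (hw0 : ∀ n, w 0 n = 0)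
    (hw : ∀ k n : ℕ, w (k + 1) n = (((n : ℝ) + 1) * (1 + b * n))⁻¹ * (1 + a * w k (n + 1))) (k : ℕ) :
    ∀ n, 0 ≤ w k n ∧ w k (n + 1) ≤ w k n ∧ 0 ≤ w k n - 2 * w k (n + 1) + w k (n + 2) := by
  induction k with
  | zero => intro n; simp [hw0]
  | succ k ih =>
    intro n
    have hn : (0 : ℝ) ≤ n := Nat.cast_nonneg n
    obtain ⟨r1, r2⟩ := rconv hb n
    have e0 := hw k n
    have e1 := hw k (n + 1)
    have e2 := hw k (n + 2)
    push_cast at e1 e2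
    have c1 : (n : ℝ) + 1 + 1 = n + 2 := by ring
    have c2 : (n : ℝ) + 2 + 1 = n + 3 := by ring
    rw [c1] at e1
    rw [c2] at e2
    obtain ⟨i1, i2, i3⟩ := ih (n + 1)
    obtain ⟨j1, j2, j3⟩ := ih (n + 2)
    have i1' := mul_nonneg ha.le i1
    have j1' := mul_nonneg ha.le j1
    have k1' := mul_nonneg ha.le (ih (n + 3)).1
    refine ⟨?_, ?_, ?_⟩
    · rw [e0]; positivity
    · rw [e0, e1]
      gcongr
    · rw [e0, e1, e2]
      apply prod_convex
      · positivity
      · exact r1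
      · exact r2
      · show 0 ≤ 1 + a * w k (n + 3)
        linarith
      · show 1 + a * w k (n + 3) ≤ 1 + a * w k (n + 2)
        gcongr
      · show 0 ≤ 1 + a * w k (n + 1) - 2 * (1 + a * w k (n + 2)) + (1 + a * w k (n + 3))
        have : 0 ≤ a * (w k (n + 1) - 2 * w k (n + 2) + w k (n + 3)) := mul_nonneg ha.le i3
        linarith

lemma convV {a b : ℝ} (ha : 0 < a) (hb : 0 < b) (p : ℕ → ℝ) (hp : ∀ n, 0 < p n)
    (hrec : ∀ n : ℕ, p (n + 1) * (((n : ℝ) + 1) * (1 + b * n)) = a * p n) (hs : HasSum p 1)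
    (v : ℕ → ℝ) (hv : ∀ n, v n = (1 - ∑ k ∈ Finset.range (n + 1), p k) / (a * p n)) (n : ℕ) :
    0 ≤ v n - 2 * v (n + 1) + v (n + 2) := by
  let w : ℕ → ℕ → ℝ := fun k n => (∑ i ∈ Finset.range k, p (n + 1 + i)) / (a * p n)
  have hc := convVk ha hb w (by intro n; simp [w]) (by
    intro k n
    have hn : (0 : ℝ) ≤ n := Nat.cast_nonneg n
    have h1 := hp n
    have h2 := hp (n + 1)
    have e : (((n : ℝ) + 1) * (1 + b * n))⁻¹ = p (n + 1) / (a * p n) := by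
      rw [← hrec n]
      field_simp
    rw [e]
    simp only [w]
    rw [Finset.sum_range_succ']
    have : ∀ i, p (n + 1 + (i + 1)) = p (n + 1 + 1 + i) := by intro i; congr 1; ring
    simp only [this, add_zero]
    field_simp
    ring)
  have ht : ∀ n, Filter.Tendsto (fun k => w k n) Filter.atTop (nhds (v n)) := by
    intro n
    have : HasSum (fun i => p (i + (n + 1))) (1 - ∑ k ∈ Finset.range (n + 1), p k) :=
      (hasSum_nat_add_iff' (n + 1)).2 hs
    have h2 := this.tendsto_sum_nat.div_const (a * p n)
    rw [hv]
    refine h2.congr ?_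
    intro k
    simp only [w]
    congr 1
    apply Finset.sum_congr rfl
    intro i _
    congr 1; ring
  have hl := ((ht n).sub ((ht (n + 1)).const_mul 2)).add (ht (n + 2))
  exact ge_of_tendsto' hl (fun k => (hc k n).2.2)

lemma key {a b : ℝ} (ha : 0 < a) (hb : 0 < b) (p : ℕ → ℝ) (hp : ∀ n, 0 < p n)
    (hrec : ∀ n : ℕ, p (n + 1) * (((n : ℝ) + 1) * (1 + b * n)) = a * p n) (hs : HasSum p 1)
    (φ : ℕ → ℝ) (hmono : Monotone φ) (hstep : ∀ n, φ (n + 1) - φ n ≤ 2) (T : ℝ)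
    (hT : HasSum (fun k => φ k * p k) T) (γ : ℕ → ℝ) (hγ0 : a * γ 1 = φ 0 - T)
    (hγ : ∀ n : ℕ, a * γ (n + 2) - ((n : ℝ) + 1) * (1 + b * n) * γ (n + 1) = φ (n + 1) - T) :
    γ 2 - γ 1 ≤ 2 / a ∧ ∀ n, γ (n + 3) - 2 * γ (n + 2) + γ (n + 1) ≤ 2 / a := by
  have hTN : ∀ N, HasSum (fun k => (φ k - φ N) * p k) (T - φ N) := by
    intro N
    have := hT.sub (hs.mul_left (φ N))
    simpa [sub_mul] using this
  have hge : ∀ N, ∑ k ∈ Finset.range N, (φ k - φ N) * p k ≤ T - φ N := by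
    intro N
    apply sum_le_hasSum _ _ (hTN N)
    intro i hi
    have : N ≤ i := by simpa using hi
    exact mul_nonneg (sub_nonneg.2 (hmono this)) (hp i).le
  constructor
  · have h0 := hge 0
    have h1 := hγ 0
    have h2 := hstep 0
    simp at h0 h1 h2
    rw [le_div_iff₀ ha]
    have : γ 1 ≤ 0 := by
      by_contra h
      push Not at h
      nlinarith
    linarith
  · intro n
    have hn : (0 : ℝ) ≤ n := Nat.cast_nonneg n
    let u : ℕ → ℝ := fun n => (∑ k ∈ Finset.range (n + 1), p k) / (a * p n)
    let v : ℕ → ℝ := fun n => (1 - ∑ k ∈ Finset.range (n + 1), p k) / (a * p n)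
    have hu : ∀ n : ℕ, a * u (n + 1) = ((n : ℝ) + 1) * (1 + b * n) * u n + 1 := by
      intro n
      have hn : (0 : ℝ) ≤ n := Nat.cast_nonneg n
      have h1 := hp n
      have h2 := hp (n + 1)
      simp only [u]
      rw [Finset.sum_range_succ _ (n + 1), ← hrec n]
      field_simp
    have hv : ∀ n : ℕ, a * v (n + 1) = ((n : ℝ) + 1) * (1 + b * n) * v n - 1 := by
      intro n
      have hn : (0 : ℝ) ≤ n := Nat.cast_nonneg n
      have h1 := hp n
      have h2 := hp (n + 1)
      simp only [v]
      rw [Finset.sum_range_succ _ (n + 1), ← hrec n]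
      field_simp
      ring
    have hcu := (convU ha hb u (by
      have := hp 0
      simp [u]; field_simp) hu n).2.2
    have hcv := convV ha hb p hp hrec hs v (fun n => rfl) n
    have hsum : ∀ n, a * p n * γ (n + 1) = ∑ k ∈ Finset.range (n + 1), (φ k - T) * p k := by
      intro n
      induction n with
      | zero => simp; rw [← hγ0]; ring
      | succ n ih =>
        rw [Finset.sum_range_succ, ← ih, ← hγ n, ← hrec n]
        ring
    set P : ℝ := ∑ k ∈ Finset.range (n + 1), (φ (n + 1) - φ k) * p k with hP
    have hP0 : 0 ≤ P := by
      apply Finset.sum_nonneg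
      intro i hi
      have : i ≤ n + 1 := by have := Finset.mem_range.1 hi; omega
      exact mul_nonneg (sub_nonneg.2 (hmono this)) (hp i).le
    have hPneg : ∑ k ∈ Finset.range (n + 1), (φ k - φ (n + 1)) * p k = - P := by
      rw [hP, ← Finset.sum_neg_distrib]
      apply Finset.sum_congr rfl
      intro i _; ring
    set Q : ℝ := T - φ (n + 1) + P with hQ
    have hQ0 : 0 ≤ Q := by
      have := hge (n + 1)
      rw [hPneg] at this
      linarith
    have g1 : γ (n + 1) = - P * v n - Q * u n := by
      have h1 := hp n
      have e : ∑ k ∈ Finset.range (n + 1), (φ k - T) * p k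
          = - P + (φ (n + 1) - T) * ∑ k ∈ Finset.range (n + 1), p k := by
        rw [← hPneg, Finset.mul_sum, ← Finset.sum_add_distrib]
        apply Finset.sum_congr rfl
        intro i _; ring
      have h2 := hsum n
      rw [e] at h2
      have h3 : γ (n + 1) = (- P + (φ (n + 1) - T) * ∑ k ∈ Finset.range (n + 1), p k) / (a * p n) := by
        rw [← h2]; field_simp
      rw [h3, hQ]
      simp only [u, v]
      field_simp
      ring
    have g2 : γ (n + 2) = - P * v (n + 1) - Q * u (n + 1) := by
      have : a * γ (n + 2) = a * (- P * v (n + 1) - Q * u (n + 1)) := by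
        linear_combination hγ n + P * hv n + Q * hu n + ((n : ℝ) + 1) * (1 + b * n) * g1 + hQ
      exact mul_left_cancel₀ ha.ne' this
    have g3 : a * γ (n + 3) = a * (- P * v (n + 2) - Q * u (n + 2)) + (φ (n + 2) - φ (n + 1)) := by
      have h1 := hγ (n + 1)
      have h2 := hu (n + 1)
      have h3 := hv (n + 1)
      push_cast at h1 h2 h3
      linear_combination h1 + P * h3 + Q * h2 + ((n : ℝ) + 1 + 1) * (1 + b * (n + 1)) * g2 + hQ
    have hst := hstep (n + 1)
    rw [le_div_iff₀ ha]
    have k1 := mul_nonneg ha.le (mul_nonneg hP0 hcv)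
    have k2 := mul_nonneg ha.le (mul_nonneg hQ0 hcu)
    have : (γ (n + 3) - 2 * γ (n + 2) + γ (n + 1)) * a
        = (φ (n + 2) - φ (n + 1)) - a * (P * (v n - 2 * v (n + 1) + v (n + 2)))
          - a * (Q * (u (n + 2) - 2 * u (n + 1) + u n)) := by
      linear_combination g3 - 2 * a * g2 + a * g1
    rw [this]
    have hst' : φ (n + 2) - φ (n + 1) ≤ 2 := hst
    linarith

lemma idsol {a b : ℝ} (ha : 0 < a) (hb : 0 < b) (p : ℕ → ℝ) (hp : ∀ n, 0 < p n)
    (hrec : ∀ n : ℕ, p (n + 1) * (((n : ℝ) + 1) * (1 + b * n)) = a * p n) (hs : HasSum p 1) :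
    ∃ (μ : ℝ) (M : ℕ → ℝ), HasSum (fun k : ℕ => (k : ℝ) * p k) μ ∧ a * M 0 = μ ∧
      (∀ n : ℕ, a * M (n + 1) - ((n : ℝ) + 1) * (1 + b * n) * M n = μ - (n + 1)) ∧
      M 1 ≤ M 0 ∧
      ∀ n, M (n + 2) - 2 * M (n + 1) + M n ≤ b / ((a + 1) * b + 1 + a / 2) := by
  have hq : ∀ n k : ℕ, 0 < 1 + b * ((n : ℝ) + k) := fun n k => by positivity
  have hMs : ∀ n : ℕ, Summable (fun k : ℕ => p k * (1 + b * ((n : ℝ) + k))⁻¹) := by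
    intro n
    refine Summable.of_nonneg_of_le (fun k => ?_) (fun k => ?_) hs.summable
    · exact mul_nonneg (hp k).le (inv_nonneg.2 (hq n k).le)
    · have : (1 + b * ((n : ℝ) + k))⁻¹ ≤ 1 := by
        apply inv_le_one_of_one_le₀
        have : 0 ≤ b * ((n : ℝ) + k) := by positivity
        linarith
      calc _ ≤ p k * 1 := mul_le_mul_of_nonneg_left this (hp k).le
        _ = p k := mul_one _
  let M : ℕ → ℝ := fun n => ∑' k : ℕ, p k * (1 + b * ((n : ℝ) + k))⁻¹
  have hM : ∀ n : ℕ, HasSum (fun k : ℕ => p k * (1 + b * ((n : ℝ) + k))⁻¹) (M n) :=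
    fun n => (hMs n).hasSum
  have hμ : HasSum (fun k : ℕ => (k : ℝ) * p k) (a * M 0) := by
    have h := (hM 0).mul_left a
    rw [← hasSum_nat_add_iff' 1]
    simp only [Finset.range_one, Finset.sum_singleton, Nat.cast_zero, zero_mul, sub_zero]
    refine my_hasSum_congr (fun k => ?_) h
    have := hq 0 k
    rw [← mul_assoc, ← hrec k]
    push_cast at this ⊢
    rw [zero_add] at this ⊢
    field_simp
  have hR : ∀ n : ℕ, a * M (n + 1) - ((n : ℝ) + 1) * (1 + b * n) * M n = a * M 0 - (n + 1) := by
    intro n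
    -- the shifted sum
    have h1 : HasSum (fun k : ℕ => ((k : ℝ) * (1 + b * (k - 1))) * p k * (1 + b * ((n : ℝ) + k))⁻¹)
        (a * M (n + 1)) := by
      have h := (hM (n + 1)).mul_left a
      rw [← hasSum_nat_add_iff' 1]
      simp only [Finset.range_one, Finset.sum_singleton, Nat.cast_zero, zero_mul, sub_zero]
      refine my_hasSum_congr (fun k => ?_) h
      rw [← mul_assoc a, ← hrec k]
      push_cast
      ring_nf
    have h2 := ((hM n).mul_left (((n : ℝ) + 1) * (1 + b * n))).add
      (hμ.sub (hs.mul_left ((n : ℝ) + 1)))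
    have h3 := h1.unique (by
      refine my_hasSum_congr (fun k => ?_) h2
      beta_reduce
      have := hq n k
      field_simp
      ring)
    linarith
  have hanti : ∀ n, M (n + 1) ≤ M n := by
    intro n
    refine hasSum_le (fun k => ?_) (hM (n + 1)) (hM n)
    have := hp k
    have := hq n k
    gcongr
    simp
  have hD : ∀ n : ℕ, HasSum (fun k : ℕ => p k * (2 * b ^ 2 /
      ((1 + b * ((n : ℝ) + k)) * (1 + b * ((n : ℝ) + k) + b) * (1 + b * ((n : ℝ) + k) + 2 * b))))
      (M n - 2 * M (n + 1) + M (n + 2)) := by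
    intro n
    have h := ((hM n).sub ((hM (n + 1)).mul_left 2)).add (hM (n + 2))
    refine my_hasSum_congr (fun k => ?_) h
    rw [← inv_convex (hq n k) hb.le]
    push_cast
    ring_nf
  have hDle : ∀ n, M n - 2 * M (n + 1) + M (n + 2) ≤ M 0 - 2 * M 1 + M 2 := by
    intro n
    refine hasSum_le (fun k => ?_) (hD n) (hD 0)
    have := hp k
    have := hq 0 k
    have : (0 : ℝ) ≤ n := Nat.cast_nonneg n
    have h0 : ((0 : ℕ) : ℝ) ≤ (n : ℝ) := by simpa using this
    gcongr
  refine ⟨a * M 0, M, hμ, rfl, hR, hanti 0, ?_⟩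
  intro n
  have hd := hDle n
  have e1 := hR 0
  have e2 := hR 1
  have hm := hanti 1
  norm_num at e1 e2 hm
  have hpos : 0 < (a + 1) * b + 1 + a / 2 := by positivity
  refine le_trans (by linarith : _ ≤ M 0 - 2 * M 1 + M 2) ?_
  rw [le_div_iff₀ hpos]
  have e3 : a * (M 0 - 2 * M 1 + M 2) = 2 * b - (M 0 - M 1) * (2 * a * b + 2 * b + 2) := by
    linear_combination e2 + (-2 - 2 * b) * e1
  have hx : M 0 - 2 * M 1 + M 2 ≤ M 0 - M 1 := by linarith
  have := mul_le_mul_of_nonneg_right hx (by positivity : 0 ≤ 2 * a * b + 2 * b + 2)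
  nlinarith

/-- One-sided bound. -/
lemma oneside {a b : ℝ} (ha : 0 < a) (hb : 0 < b) (p : ℕ → ℝ) (hp : ∀ n, 0 < p n)
    (hrec : ∀ n : ℕ, p (n + 1) * (((n : ℝ) + 1) * (1 + b * n)) = a * p n) (hs : HasSum p 1)
    (f : ℕ → ℝ) (hf : ∀ x y : ℕ, |f x - f y| ≤ |(x : ℝ) - (y : ℝ)|) (T : ℝ)
    (hT : HasSum (fun k => f k * p k) T) (g : ℕ → ℝ) (hg0 : g 0 = g 1)
    (hg : ∀ n : ℕ, a * g (n + 1) - ((n : ℝ) + b * (n : ℝ) * ((n : ℝ) - 1)) * g n = f n - T) (n : ℕ) :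
    g (n + 2) - 2 * g (n + 1) + g n ≤ 2 / a + b / ((a + 1) * b + 1 + a / 2) := by
  obtain ⟨μ, M, hμ, hM0, hM, hM1, hMD⟩ := idsol ha hb p hp hrec hs
  have hf1 : ∀ n, |f (n + 1) - f n| ≤ 1 := by
    intro n
    have := hf (n + 1) n
    simpa using this
  have hk := key ha hb p hp hrec hs (fun n => f n + n)
    (monotone_nat_of_le_succ (fun n => by
      have := (abs_le.1 (hf1 n)).1
      push_cast
      linarith))
    (fun n => by
      have := (abs_le.1 (hf1 n)).2
      push_cast
      linarith) (T + μ) (by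
      have := hT.add hμ
      convert this using 2 with k
      ring)
    (fun n => g n - M (n - 1)) (by
      have := hg 0
      simp at this ⊢
      linarith) (by
      intro n
      have h1 := hg (n + 1)
      have h2 := hM n
      have e1 : n + 2 - 1 = n + 1 := by omega
      have e2 : n + 1 - 1 = n := by omega
      simp only [e1, e2]
      push_cast at h1 ⊢
      linear_combination h1 - h2)
  obtain ⟨k1, k2⟩ := hk
  have hB : 0 < b / ((a + 1) * b + 1 + a / 2) := by positivity
  rcases n with _ | n
  · simp at k1 ⊢
    linarith
  · have h1 := k2 n
    have h2 := hMD n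
    have e0 : n + 3 - 1 = n + 2 := by omega
    have e1 : n + 2 - 1 = n + 1 := by omega
    have e2 : n + 1 - 1 = n := by omega
    simp only [e0, e1, e2] at h1
    show g (n + 3) - 2 * g (n + 2) + g (n + 1) ≤ _
    linarith


/-- bound on the second difference `|Δ²g̃_f n|` for the PBD(a;0,1,b) Stein solution. -/
theorem stmt_6
    (a b : ℝ) (ha : 0 < a) (hb : 0 < b)
    (C : ℝ) (hC : 0 < C) (π : ℕ → ℝ)
    (hπ : ∀ n : ℕ, π n =
      C * a ^ n / ∏ i ∈ Finset.range n, (((i : ℝ) + 1) + b * ((i : ℝ) + 1) * (i : ℝ)))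
    (hπ1 : ∑' n, π n = 1)
    (f : ℕ → ℝ) (hf : ∀ x y : ℕ, |f x - f y| ≤ |(x : ℝ) - (y : ℝ)|)
    (hfs : Summable fun n => |f n| * π n)
    (g : ℕ → ℝ) (hg0 : g 0 = g 1)
    (hg : ∀ n : ℕ, a * g (n + 1) - ((n : ℝ) + b * (n : ℝ) * ((n : ℝ) - 1)) * g n
      = f n - ∑' k, f k * π k)
    :
    ∀ n : ℕ, |g (n + 2) - 2 * g (n + 1) + g n| ≤ 2 / a + b / ((a + 1) * b + 1 + a / 2) := by
  have hfac : ∀ i : ℕ, ((i : ℝ) + 1) + b * ((i : ℝ) + 1) * (i : ℝ) = ((i : ℝ) + 1) * (1 + b * i) := by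
    intro i; ring
  have hp : ∀ n, 0 < π n := by
    intro n
    rw [hπ]
    apply div_pos (by positivity)
    apply Finset.prod_pos
    intro i _
    positivity
  have hrec : ∀ n : ℕ, π (n + 1) * (((n : ℝ) + 1) * (1 + b * n)) = a * π n := by
    intro n
    have h0 : 0 < ∏ i ∈ Finset.range n, (((i : ℝ) + 1) + b * ((i : ℝ) + 1) * (i : ℝ)) := by
      apply Finset.prod_pos
      intro i _
      positivity
    have h1 : (0 : ℝ) < ((n : ℝ) + 1) * (1 + b * n) := by positivity
    rw [hπ, hπ, Finset.prod_range_succ, hfac n]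
    generalize (∏ i ∈ Finset.range n, (((i : ℝ) + 1) + b * ((i : ℝ) + 1) * (i : ℝ))) = X at h0 ⊢
    field_simp
    ring
  have hsum : Summable π := by
    by_contra h
    rw [tsum_eq_zero_of_not_summable h] at hπ1
    norm_num at hπ1
  have hs : HasSum π 1 := hπ1 ▸ hsum.hasSum
  have hfs' : Summable fun n => f n * π n := by
    apply Summable.of_abs
    refine hfs.congr ?_
    intro n
    rw [abs_mul, abs_of_pos (hp n)]
  have hT := hfs'.hasSum
  intro n
  rw [abs_le]
  constructor
  · have := oneside ha hb π hp hrec hs (fun n => - f n) (by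
      intro x y
      rw [← abs_neg]
      convert hf x y using 2
      ring) (- ∑' k, f k * π k) (by simpa using hT.neg) (fun n => - g n) (by simp [hg0]) (by
      intro n
      linear_combination - hg n) n
    linarith
  · exact oneside ha hb π hp hrec hs f hf _ hT g hg0 hg n
end

section
/- The first difference of the Stein solution for f₁ is increasing on i ≥ 1, and its second difference is positive and decreasing on i ≥ 1: for every i ≥ 1, Δg_{f₁}(i+1) ≥ Δg_{f₁}(i), Δ²g_{f₁}(i) ≥ 0, and Δ²g_{f₁}(i+1) ≤ Δ²g_{f₁}(i). -/
/-- the first difference of the Stein solution for `f₁` is increasing on `i ≥ 1`, and its second difference is positive and decreasing on `i ≥ 1`. -/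
theorem stmt_10
    (α β : ℝ) (hα : 0 < α) (hβ : 0 < β)
    (C : ℝ) (hC : 0 < C) (π : ℕ → ℝ)
    (hπ : ∀ n : ℕ, π n =
      C * α ^ n / ∏ i ∈ Finset.range n, (β * ((i : ℝ) + 1) + ((i : ℝ) + 1) * (i : ℝ)))
    (hπ1 : ∑' n, π n = 1)
    (g₁ : ℕ → ℝ) (hg₁0 : g₁ 0 = g₁ 1)
    (hg₁ : ∀ n : ℕ, α * g₁ (n + 1) - (β * (n : ℝ) + (n : ℝ) * ((n : ℝ) - 1)) * g₁ n
      = -(n : ℝ) - ∑' k : ℕ, -(k : ℝ) * π k)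
    :
    ∀ i : ℕ, 1 ≤ i →
      g₁ (i + 1) - g₁ i ≤ g₁ (i + 2) - g₁ (i + 1) ∧
      0 ≤ g₁ (i + 2) - 2 * g₁ (i + 1) + g₁ i ∧
      g₁ (i + 3) - 2 * g₁ (i + 2) + g₁ (i + 1) ≤ g₁ (i + 2) - 2 * g₁ (i + 1) + g₁ i := by
  have hpos : ∀ n, 0 < π n := by
    intro n
    rw [hπ]
    have : 0 < ∏ i ∈ Finset.range n, (β * ((i : ℝ) + 1) + ((i : ℝ) + 1) * (i : ℝ)) :=
      Finset.prod_pos (fun i _ => by positivity)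
    positivity
  have hrec : ∀ k : ℕ, ((k : ℝ) + 1) * (k + β) * π (k + 1) = α * π k := by
    intro k
    have : 0 < ∏ i ∈ Finset.range k, (β * ((i : ℝ) + 1) + ((i : ℝ) + 1) * (i : ℝ)) :=
      Finset.prod_pos (fun i _ => by positivity)
    have h2 : (0 : ℝ) < β * ((k : ℝ) + 1) + ((k : ℝ) + 1) * (k : ℝ) := by positivity
    rw [hπ, hπ, Finset.prod_range_succ]
    rw [pow_succ, mul_div_assoc', mul_div_assoc', div_eq_div_iff (by positivity) (by positivity)]
    ring
  have hsum : Summable π := by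
    by_contra h
    rw [tsum_eq_zero_of_not_summable h] at hπ1
    norm_num at hπ1
  have hrec' : ∀ k : ℕ, ((k : ℝ) + 1) * π (k + 1) = α * (π k / (k + β)) := by
    intro k
    have h2 : (0 : ℝ) < k + β := by positivity
    have := hrec k
    field_simp
    linarith
  have hsdiv : ∀ n : ℕ, Summable (fun k : ℕ => π k / ((n : ℝ) + β + k)) := by
    intro n
    refine Summable.of_nonneg_of_le (fun k => ?_) (fun k => ?_) (hsum.div_const β)
    · have := hpos k
      positivity
    · have := hpos k
      have h0 : (0 : ℝ) ≤ n := by positivity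
      have h1 : (0 : ℝ) ≤ k := by positivity
      exact div_le_div_of_nonneg_left this.le hβ (by linarith)
  have hsk1 : Summable (fun k : ℕ => ((k + 1 : ℕ) : ℝ) * π (k + 1)) := by
    have := (hsdiv 0).mul_left α
    refine this.congr (fun k => ?_)
    push_cast
    rw [hrec' k]
    ring_nf
  have hsk : Summable (fun k : ℕ => (k : ℝ) * π k) :=
    (summable_nat_add_iff (f := fun k : ℕ => (k : ℝ) * π k) 1).1 hsk1
  set m : ℝ := ∑' k : ℕ, (k : ℝ) * π k with hm
  have hneg : ∑' k : ℕ, -(k : ℝ) * π k = -m := by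
    rw [hm, ← tsum_neg]
    congr 1
    ext k
    ring
  have key : ∀ n : ℕ, g₁ (n + 1) = ∑' k : ℕ, π k / ((n : ℝ) + β + k) := by
    intro n
    induction n with
    | zero =>
      have h := hg₁ 0
      rw [hneg] at h
      have h2 : m = α * ∑' k : ℕ, π k / (((0 : ℕ) : ℝ) + β + k) := by
        rw [hm, hsk.tsum_eq_zero_add, ← tsum_mul_left]
        simp only [Nat.cast_zero, zero_mul, zero_add]
        congr 1
        ext k
        push_cast
        rw [hrec' k, add_comm β]
      rw [h2] at h
      have h3 : α * g₁ (0 + 1) = α * ∑' k : ℕ, π k / (((0 : ℕ) : ℝ) + β + k) := by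
        rw [← sub_eq_zero]
        simp only [Nat.cast_zero] at h ⊢
        linarith
      exact mul_left_cancel₀ hα.ne' h3
    | succ n ih =>
      have h := hg₁ (n + 1)
      rw [hneg, ih] at h
      have hu : ∀ k : ℕ, (k : ℝ) * (k + β - 1) * π k / ((n : ℝ) + β + k)
          = ((k : ℝ) * π k - ((n : ℝ) + 1) * π k)
            + ((n : ℝ) + 1) * (n + β) * (π k / ((n : ℝ) + β + k)) := by
        intro k
        have : (0 : ℝ) < n + β + k := by positivity
        field_simp
        ring
      have hA := (hsk.sub (hsum.mul_left ((n : ℝ) + 1)))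
      have hB := (hsdiv n).mul_left (((n : ℝ) + 1) * (n + β))
      have hus : Summable (fun k : ℕ => (k : ℝ) * (k + β - 1) * π k / ((n : ℝ) + β + k)) :=
        (hA.add hB).congr (fun k => (hu k).symm)
      have e1 : ∑' k : ℕ, (k : ℝ) * (k + β - 1) * π k / ((n : ℝ) + β + k)
          = m - ((n : ℝ) + 1)
            + ((n : ℝ) + 1) * (n + β) * ∑' k : ℕ, π k / ((n : ℝ) + β + k) := by
        rw [tsum_congr hu, hA.tsum_add hB, hsk.tsum_sub (hsum.mul_left _), tsum_mul_left,
          tsum_mul_left, hπ1, mul_one]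
      have e2 : ∑' k : ℕ, (k : ℝ) * (k + β - 1) * π k / ((n : ℝ) + β + k)
          = α * ∑' k : ℕ, π k / (((n + 1 : ℕ) : ℝ) + β + k) := by
        rw [hus.tsum_eq_zero_add, ← tsum_mul_left]
        simp only [Nat.cast_zero, zero_mul, zero_div, zero_add]
        congr 1
        ext k
        have := hrec k
        rw [mul_div_assoc', ← this]
        push_cast
        congr 1 <;> ring
      have h3 : α * g₁ (n + 1 + 1) = α * ∑' k : ℕ, π k / (((n + 1 : ℕ) : ℝ) + β + k) := by
        rw [← e2, e1]
        push_cast at h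
        linarith
      exact mul_left_cancel₀ hα.ne' h3
  have hD2 : ∀ n : ℕ, HasSum (fun k : ℕ => π k / (((n + 2 : ℕ) : ℝ) + β + k)
      - 2 * (π k / (((n + 1 : ℕ) : ℝ) + β + k)) + π k / ((n : ℝ) + β + k))
      (g₁ (n + 3) - 2 * g₁ (n + 2) + g₁ (n + 1)) := by
    intro n
    rw [key (n + 2), key (n + 1), key n]
    exact ((hsdiv (n + 2)).hasSum.sub ((hsdiv (n + 1)).hasSum.mul_left 2)).add (hsdiv n).hasSum
  have hterm : ∀ n k : ℕ, π k / (((n + 2 : ℕ) : ℝ) + β + k)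
      - 2 * (π k / (((n + 1 : ℕ) : ℝ) + β + k)) + π k / ((n : ℝ) + β + k)
      = 2 * π k / (((n : ℝ) + β + k) * ((n : ℝ) + β + k + 1) * ((n : ℝ) + β + k + 2)) := by
    intro n k
    have hx : (0 : ℝ) < n + β + k := by positivity
    push_cast
    have e2 : (n : ℝ) + 2 + β + k = (n + β + k) + 2 := by ring
    have e1 : (n : ℝ) + 1 + β + k = (n + β + k) + 1 := by ring
    rw [e2, e1]
    generalize (n : ℝ) + β + k = x at hx
    field_simp
    ring
  intro i hi
  obtain ⟨n, rfl⟩ : ∃ n, i = n + 1 := ⟨i - 1, by omega⟩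
  have h0 : 0 ≤ g₁ (n + 3) - 2 * g₁ (n + 2) + g₁ (n + 1) := by
    refine (hD2 n).nonneg (fun k => ?_)
    rw [hterm]
    have := hpos k
    positivity
  have h1 : g₁ (n + 1 + 3) - 2 * g₁ (n + 1 + 2) + g₁ (n + 1 + 1)
      ≤ g₁ (n + 3) - 2 * g₁ (n + 2) + g₁ (n + 1) := by
    refine hasSum_le (fun k => ?_) (hD2 (n + 1)) (hD2 n)
    rw [hterm, hterm]
    have := hpos k
    push_cast
    gcongr <;> linarith
  refine ⟨?_, h0, h1⟩
  change g₁ (n + 2) - g₁ (n + 1) ≤ g₁ (n + 3) - g₁ (n + 2)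
  linarith
end

section
/- The mean of the PBD(α;0,β,1) distribution satisfies 2α(α + β + 1)/(2(β + 1)(α + β) + α²) ≤ ∑_{k=1}^∞ k π_k ≤ α(α + 2β + 2)/(β(α + 2β + 2) + 2α). -/
lemma pbd_step (α β : ℝ) (hβ : 0 < β) (C : ℝ) (π : ℕ → ℝ)
    (hπ : ∀ n : ℕ, π n =
      C * α ^ n / ∏ i ∈ Finset.range n, (β * ((i : ℝ) + 1) + ((i : ℝ) + 1) * (i : ℝ))) (n : ℕ) :
    ((n : ℝ) + 1) * (β + n) * π (n + 1) = α * π n := by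
  have hp : (∏ i ∈ Finset.range n, (β * ((i : ℝ) + 1) + ((i : ℝ) + 1) * (i : ℝ))) ≠ 0 :=
    (Finset.prod_pos fun i _ => by positivity).ne'
  rw [hπ (n + 1), hπ n, Finset.prod_range_succ]
  have h2 : β * ((n : ℝ) + 1) + ((n : ℝ) + 1) * (n : ℝ) ≠ 0 := by positivity
  field_simp
  ring

lemma pbd_desc (n k : ℕ) :
    (((n + 1).descFactorial (k + 2) : ℕ) : ℝ) =
      ((n : ℝ) - k) * (((n : ℝ) + 1) * (n.descFactorial k : ℝ)) := by
  rw [Nat.succ_descFactorial_succ, Nat.descFactorial_succ]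
  by_cases h : k ≤ n
  · push_cast [Nat.cast_sub h]; ring
  · rw [Nat.descFactorial_of_lt (n := n) (k := k) (by omega)]; simp

lemma pbd_summable (α β : ℝ) (hα : 0 < α) (hβ : 0 < β) (π : ℕ → ℝ)
    (hpos : ∀ n, 0 ≤ π n) (hs : Summable π)
    (hstep : ∀ n : ℕ, ((n : ℝ) + 1) * (β + n) * π (n + 1) = α * π n) (k : ℕ) :
    Summable fun n : ℕ => (n.descFactorial k : ℝ) * π n := by
  induction k with
  | zero => simpa using hs
  | succ k ih =>
    rw [← summable_nat_add_iff 1]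
    refine Summable.of_nonneg_of_le (fun n => by have := hpos (n + 1); positivity)
      (fun n => ?_) (ih.mul_left (α / β))
    have h1 := hpos (n + 1)
    rw [Nat.succ_descFactorial_succ, div_mul_eq_mul_div, le_div_iff₀ hβ]
    have e : α * ((n.descFactorial k : ℝ) * π n)
        = (n.descFactorial k : ℝ) * (((n : ℝ) + 1) * (β + n) * π (n + 1)) := by
      rw [hstep]; ring
    rw [e]
    have : 0 ≤ (n.descFactorial k : ℝ) * (((n : ℝ) + 1) * n * π (n + 1)) := by positivity
    push_cast
    nlinarith

lemma pbd_moment (α β : ℝ) (π : ℕ → ℝ)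
    (hs : ∀ k : ℕ, Summable fun n : ℕ => (n.descFactorial k : ℝ) * π n)
    (hstep : ∀ n : ℕ, ((n : ℝ) + 1) * (β + n) * π (n + 1) = α * π n) (k : ℕ) :
    α * ∑' n : ℕ, (n.descFactorial k : ℝ) * π n =
      (∑' n : ℕ, (n.descFactorial (k + 2) : ℝ) * π n) +
        (β + k) * ∑' n : ℕ, (n.descFactorial (k + 1) : ℝ) * π n := by
  rw [(hs (k + 2)).tsum_eq_zero_add, (hs (k + 1)).tsum_eq_zero_add]
  simp only [Nat.zero_descFactorial_succ, Nat.cast_zero, zero_mul, zero_add]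
  rw [← tsum_mul_left, ← tsum_mul_left, ← Summable.tsum_add]
  · congr 1
    ext n
    rw [pbd_desc, Nat.succ_descFactorial_succ]
    push_cast
    linear_combination -(n.descFactorial k : ℝ) * hstep n
  · exact (summable_nat_add_iff 1).2 (hs (k + 2))
  · exact ((summable_nat_add_iff 1).2 (hs (k + 1))).mul_left _


/-- two-sided bound on the mean of PBD(α;0,β,1). -/
theorem stmt_14
    (α β : ℝ) (hα : 0 < α) (hβ : 0 < β)
    (C : ℝ) (hC : 0 < C) (π : ℕ → ℝ)
    (hπ : ∀ n : ℕ, π n =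
      C * α ^ n / ∏ i ∈ Finset.range n, (β * ((i : ℝ) + 1) + ((i : ℝ) + 1) * (i : ℝ)))
    (hπ1 : ∑' n, π n = 1)
    :
    2 * α * (α + β + 1) / (2 * (β + 1) * (α + β) + α ^ 2) ≤ ∑' k : ℕ, (k : ℝ) * π k ∧
      ∑' k : ℕ, (k : ℝ) * π k ≤ α * (α + 2 * β + 2) / (β * (α + 2 * β + 2) + 2 * α) := by
  have hstep := pbd_step α β hβ C π hπ
  have hpos : ∀ n, 0 ≤ π n := fun n => by
    rw [hπ]
    have : 0 < ∏ i ∈ Finset.range n, (β * ((i : ℝ) + 1) + ((i : ℝ) + 1) * (i : ℝ)) :=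
      Finset.prod_pos fun i _ => by positivity
    positivity
  have hs : Summable π := by
    by_contra h
    rw [tsum_eq_zero_of_not_summable h] at hπ1
    exact zero_ne_one hπ1
  have hS := pbd_summable α β hα hβ π hpos hs hstep
  have hM := pbd_moment α β π hS hstep
  have hN : ∀ k : ℕ, 0 ≤ ∑' n : ℕ, (n.descFactorial k : ℝ) * π n := fun k =>
    tsum_nonneg fun n => mul_nonneg (Nat.cast_nonneg _) (hpos n)
  have e1 : ∑' k : ℕ, (k : ℝ) * π k = ∑' n : ℕ, (n.descFactorial 1 : ℝ) * π n := by simp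
  have e0 : ∑' n : ℕ, (n.descFactorial 0 : ℝ) * π n = 1 := by simpa using hπ1
  rw [e1]
  have m0 := hM 0
  have m1 := hM 1
  have m2 := hM 2
  have m3 := hM 3
  rw [e0] at m0
  have p1 := hN 1
  have p2 := hN 2
  have p3 := hN 3
  have p4 := hN 4
  have p5 := hN 5
  norm_num only [Nat.cast_zero, Nat.cast_one, Nat.cast_ofNat] at m0 m1 m2 m3
  generalize (∑' n : ℕ, (n.descFactorial 1 : ℝ) * π n) = A at *
  generalize (∑' n : ℕ, (n.descFactorial 2 : ℝ) * π n) = B at *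
  generalize (∑' n : ℕ, (n.descFactorial 3 : ℝ) * π n) = D at *
  generalize (∑' n : ℕ, (n.descFactorial 4 : ℝ) * π n) = E at *
  generalize (∑' n : ℕ, (n.descFactorial 5 : ℝ) * π n) = F at *
  clear hM hN hS hstep hπ hπ1 hs hpos e0 e1
  constructor
  · have hE : E ≤ α * D := by nlinarith [mul_nonneg hβ.le p4]
    -- lower bound on the third factorial moment
    have h3 : α * (1 - β) * B ≤ (α + 2) * D := by
      rcases le_total 1 β with h | h
      · have : 0 ≤ α * (β - 1) * B := by
          have : 0 ≤ β - 1 := by linarith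
          positivity
        have : 0 ≤ (α + 2) * D := by positivity
        linarith
      · have h0 : 0 ≤ 1 - β := by linarith
        have hB : α * B ≤ (α + β + 2) * D := by linarith
        have := mul_le_mul_of_nonneg_left hB h0
        have q1 : 0 ≤ β * α * D := by positivity
        have q2 : 0 ≤ β * D := by positivity
        have q3 : 0 ≤ β * β * D := by positivity
        nlinarith
    have h2 : 2 * (α + β + 1) * B ≤ α * (α + 2) * A := by
      have : α * (α + 2) * A = (α + 2) * (D + (β + 1) * B) := by
        linear_combination (α + 2) * m1
      nlinarith
    rw [div_le_iff₀ (by positivity)]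
    have hB : B = α - β * A := by linarith
    rw [hB] at h2
    nlinarith
  · have h3 : 2 * D ≤ α * B := by nlinarith [mul_nonneg hβ.le p3]
    have h2 : 2 * α * A ≤ (α + 2 * β + 2) * B := by linarith
    rw [le_div_iff₀ (by positivity)]
    have hB : B = α - β * A := by linarith
    rw [hB] at h2
    nlinarith
end

section
/- For every 1-Lipschitz function f : ℤ₊ → ℝ and every i ≥ 1, the first difference of the Stein solution satisfies |Δg_f(i)| ≤ max{i, √α + 1} · min( 1/α, 1/(βi + i(i−1)) ). -/
/-- bound on `|Δg_f i|` for `i ≥ 1` in terms of `max{i, √α + 1}` and the death/birth rates. -/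
theorem stmt_19
    (α β : ℝ) (hα : 0 < α) (hβ : 0 < β)
    (C : ℝ) (hC : 0 < C) (π : ℕ → ℝ)
    (hπ : ∀ n : ℕ, π n =
      C * α ^ n / ∏ i ∈ Finset.range n, (β * ((i : ℝ) + 1) + ((i : ℝ) + 1) * (i : ℝ)))
    (hπ1 : ∑' n, π n = 1)
    (f : ℕ → ℝ) (hf : ∀ x y : ℕ, |f x - f y| ≤ |(x : ℝ) - (y : ℝ)|)
    (hfs : Summable fun n => |f n| * π n)
    (g : ℕ → ℝ) (hg0 : g 0 = g 1)
    (hg : ∀ n : ℕ, α * g (n + 1) - (β * (n : ℝ) + (n : ℝ) * ((n : ℝ) - 1)) * g n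
      = f n - ∑' k, f k * π k)
    :
    ∀ i : ℕ, 1 ≤ i → |g (i + 1) - g i| ≤
      max (i : ℝ) (Real.sqrt α + 1) *
        min (1 / α) (1 / (β * (i : ℝ) + (i : ℝ) * ((i : ℝ) - 1))) := by
  intro i hi
  have haP : ∀ n : ℕ, 0 < β * ((n : ℝ) + 1) + ((n : ℝ) + 1) * (n : ℝ) := fun n => by positivity
  have hpos : ∀ n, 0 < π n := by
    intro n
    rw [hπ n]
    have : 0 < ∏ i ∈ Finset.range n, (β * ((i : ℝ) + 1) + ((i : ℝ) + 1) * (i : ℝ)) :=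
      Finset.prod_pos fun k _ => haP k
    positivity
  have hrec : ∀ n : ℕ, (β * ((n : ℝ) + 1) + ((n : ℝ) + 1) * (n : ℝ)) * π (n + 1) = α * π n := by
    intro n
    have h1 : 0 < ∏ i ∈ Finset.range n, (β * ((i : ℝ) + 1) + ((i : ℝ) + 1) * (i : ℝ)) :=
      Finset.prod_pos fun k _ => haP k
    have h2 := haP n
    rw [hπ n, hπ (n + 1), Finset.prod_range_succ]
    field_simp
    ring
  have hs : Summable π := by
    by_contra h
    rw [tsum_eq_zero_of_not_summable h] at hπ1
    norm_num at hπ1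
  have hfs' : Summable fun n => f n * π n := by
    refine Summable.of_abs (hfs.congr fun n => ?_)
    rw [abs_mul, abs_of_pos (hpos n)]
  clear hπ
  obtain ⟨u, hu⟩ : ∃ u : ℕ → ℝ, ∀ k, u k = f k - f i := ⟨_, fun _ => rfl⟩
  have hus : Summable fun n => u n * π n := by
    refine (hfs'.sub (hs.mul_left (f i))).congr fun n => ?_
    rw [hu]; ring
  have hum : ∑' k, f k * π k = f i + ∑' k, u k * π k := by
    have : ∑' k, f k * π k = ∑' k, (f i * π k + u k * π k) := by
      refine tsum_congr fun k => ?_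
      rw [hu]; ring
    rw [this, (hs.mul_left (f i)).tsum_add hus, tsum_mul_left, hπ1, mul_one]
  obtain ⟨m, hm⟩ : ∃ m, m = ∑' k, u k * π k := ⟨_, rfl⟩
  have hg' : ∀ n : ℕ, α * g (n + 1) - (β * (n : ℝ) + (n : ℝ) * ((n : ℝ) - 1)) * g n
      = u n - m := by
    intro n
    rw [hg n, hum, hu, hm]; ring
  have hsol : ∀ n : ℕ, α * π n * g (n + 1) = ∑ k ∈ Finset.range (n + 1), (u k * π k - m * π k) := by
    intro n
    induction n with
    | zero =>
      have := hg' 0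
      simp at this ⊢
      linear_combination π 0 * this
    | succ n ih =>
      rw [Finset.sum_range_succ, ← ih]
      have h1 := hg' (n + 1)
      push_cast at h1
      linear_combination π (n + 1) * h1 + g (n + 1) * hrec n
  obtain ⟨j, rfl⟩ : ∃ j, i = j + 1 := ⟨i - 1, by omega⟩
  have hui : u (j + 1) = 0 := by rw [hu]; ring
  have e1 := hsol j
  have e2 := hsol (j + 1)
  rw [Finset.sum_range_succ] at e2
  rw [Finset.sum_sub_distrib, ← Finset.mul_sum] at e1 e2
  rw [hui] at e2
  obtain ⟨a, ha⟩ : ∃ a : ℝ, a = β * ((j : ℝ) + 1) + ((j : ℝ) + 1) * (j : ℝ) := ⟨_, rfl⟩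
  have ha0 : 0 < a := ha ▸ haP j
  have hrj : a * π (j + 1) = α * π j := ha ▸ hrec j
  -- pieces
  obtain ⟨F, hF⟩ : ∃ F, F = ∑ k ∈ Finset.range (j + 1), π k := ⟨_, rfl⟩
  obtain ⟨L, hL⟩ : ∃ L, L = ∑ k ∈ Finset.range (j + 1), u k * π k := ⟨_, rfl⟩
  obtain ⟨T, hT⟩ : ∃ T, T = ∑' k, π (k + (j + 2)) := ⟨_, rfl⟩
  obtain ⟨R, hR⟩ : ∃ R, R = ∑' k, u (k + (j + 2)) * π (k + (j + 2)) := ⟨_, rfl⟩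
  have hsT : Summable fun k => π (k + (j + 2)) := (summable_nat_add_iff (j + 2)).2 hs
  have hsR : Summable fun k => u (k + (j + 2)) * π (k + (j + 2)) :=
    (summable_nat_add_iff (f := fun k => u k * π k) (j + 2)).2 hus
  have htot : F + π (j + 1) + T = 1 := by
    rw [hF, hT, ← hπ1, ← hs.sum_add_tsum_nat_add (j + 2), Finset.sum_range_succ _ (j + 1)]
  have hmLR : m = L + R := by
    rw [hm, hL, hR, ← hus.sum_add_tsum_nat_add (j + 2), Finset.sum_range_succ _ (j + 1), hui]
    ring
  rw [← hF, ← hL] at e1 e2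
  have hF0 : 0 ≤ F := hF ▸ Finset.sum_nonneg fun k _ => (hpos k).le
  have hT0 : 0 ≤ T := hT ▸ tsum_nonneg fun k => (hpos _).le
  have hp := hpos (j + 1)
  -- monotone rates
  have hA : a * T ≤ α * (π (j + 1) + T) := by
    have h1 : π (j + 1) + T = ∑' k, π (k + (j + 1)) := by
      have h2 : Summable fun k => π (k + (j + 1)) := (summable_nat_add_iff (j + 1)).2 hs
      rw [h2.tsum_eq_zero_add, hT]
      congr 1
      · simp
      · refine tsum_congr fun k => ?_
        congr 1; ring
    rw [h1, hT, ← tsum_mul_left, ← tsum_mul_left]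
    refine Summable.tsum_le_tsum (fun k => ?_) (hsT.mul_left a)
      (((summable_nat_add_iff (j + 1)).2 hs).mul_left α)
    have h3 := hrec (k + (j + 1))
    rw [← h3, show k + (j + 1) + 1 = k + (j + 2) by ring]
    refine mul_le_mul_of_nonneg_right ?_ (hpos _).le
    rw [ha]
    push_cast
    have hk : (0 : ℝ) ≤ k := Nat.cast_nonneg k
    have hj : (0 : ℝ) ≤ j := Nat.cast_nonneg j
    gcongr <;> linarith
  have hB : α * F ≤ a * (F + π (j + 1)) := by
    have h1 : F + π (j + 1) = ∑ k ∈ Finset.range (j + 1), π (k + 1) + π 0 := by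
      rw [hF, ← Finset.sum_range_succ, Finset.sum_range_succ']
    have h2 : α * F ≤ a * ∑ k ∈ Finset.range (j + 1), π (k + 1) := by
      rw [hF, Finset.mul_sum, Finset.mul_sum]
      refine Finset.sum_le_sum fun k hk => ?_
      rw [← hrec k]
      refine mul_le_mul_of_nonneg_right ?_ (hpos _).le
      have hk : (k : ℝ) ≤ j := by
        have := Finset.mem_range.1 hk
        exact_mod_cast Nat.lt_succ_iff.1 this
      rw [ha]
      gcongr
    rw [h1]
    nlinarith [mul_pos ha0 (hpos 0)]
  -- bounds on L and R
  have hLb : |L| ≤ ((j : ℝ) + 1) * F := by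
    rw [hL, hF, Finset.mul_sum]
    refine (Finset.abs_sum_le_sum_abs _ _).trans (Finset.sum_le_sum fun k hk => ?_)
    rw [abs_mul, abs_of_pos (hpos k)]
    refine mul_le_mul_of_nonneg_right ?_ (hpos _).le
    rw [hu]
    refine (hf _ _).trans ?_
    have hk : (k : ℝ) ≤ j := by
      have := Finset.mem_range.1 hk
      exact_mod_cast Nat.lt_succ_iff.1 this
    have hk0 : (0 : ℝ) ≤ k := Nat.cast_nonneg k
    push_cast
    rw [abs_le]; constructor <;> linarith
  have hs0 : 0 < √α := Real.sqrt_pos.2 hα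
  have hss : √α * √α = α := Real.mul_self_sqrt hα.le
  have hpt : ∀ k : ℕ, ((k : ℝ) + 1) ^ 2 * π (k + 1 + (j + 2)) ≤ α * π (k + (j + 2)) := by
    intro k
    rw [← hrec (k + (j + 2)), show k + 1 + (j + 2) = k + (j + 2) + 1 by ring]
    refine mul_le_mul_of_nonneg_right ?_ (hpos _).le
    push_cast
    have hk : (0 : ℝ) ≤ k := Nat.cast_nonneg k
    have hj : (0 : ℝ) ≤ j := Nat.cast_nonneg j
    nlinarith [mul_nonneg hβ.le (by positivity : (0 : ℝ) ≤ k + (j + 2) + 1), mul_nonneg hk hj]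
  have hQs1 : Summable fun k : ℕ => ((k : ℝ) + 1) ^ 2 * π (k + 1 + (j + 2)) :=
    Summable.of_nonneg_of_le (fun k => mul_nonneg (by positivity) (hpos _).le) hpt (hsT.mul_left α)
  have hQs : Summable fun k : ℕ => (k : ℝ) ^ 2 * π (k + (j + 2)) := by
    rw [← summable_nat_add_iff 1]
    refine hQs1.congr fun k => ?_
    push_cast; rfl
  have hQ : ∑' k : ℕ, (k : ℝ) ^ 2 * π (k + (j + 2)) ≤ α * T := by
    rw [hQs.tsum_eq_zero_add, hT, ← tsum_mul_left]
    simp only [Nat.cast_zero, Nat.cast_add, Nat.cast_one]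
    rw [zero_pow two_ne_zero, zero_mul, zero_add]
    exact Summable.tsum_le_tsum hpt hQs1 (hsT.mul_left α)
  have hRb : |R| ≤ (√α + 1) * T := by
    have hdom : ∀ k : ℕ, |u (k + (j + 2)) * π (k + (j + 2))| ≤
        (1 / (2 * √α)) * ((k : ℝ) ^ 2 * π (k + (j + 2))) + (√α / 2 + 1) * π (k + (j + 2)) := by
      intro k
      rw [abs_mul, abs_of_pos (hpos _), ← mul_assoc, ← add_mul]
      refine mul_le_mul_of_nonneg_right ?_ (hpos _).le
      rw [hu]
      refine (hf _ _).trans ?_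
      have hk : (0 : ℝ) ≤ k := Nat.cast_nonneg k
      have : |((k + (j + 2) : ℕ) : ℝ) - ((j + 1 : ℕ) : ℝ)| = k + 1 := by
        push_cast
        rw [abs_of_nonneg] <;> linarith
      rw [this]
      have h5 : 1 / (2 * √α) * (k : ℝ) ^ 2 + (√α / 2 + 1) - (k + 1) = (k - √α) ^ 2 / (2 * √α) := by
        field_simp
        ring
      have h6 : 0 ≤ ((k : ℝ) - √α) ^ 2 / (2 * √α) := by positivity
      linarith
    have hd1 := hQs.mul_left (1 / (2 * √α))
    have hd2 := hsT.mul_left (√α / 2 + 1)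
    have h7 : |R| ≤ ∑' k : ℕ, |u (k + (j + 2)) * π (k + (j + 2))| := by
      rw [hR]
      simpa [Real.norm_eq_abs] using norm_tsum_le_tsum_norm hsR.norm
    refine h7.trans ((Summable.tsum_le_tsum hdom hsR.abs (hd1.add hd2)).trans ?_)
    rw [hd1.tsum_add hd2, tsum_mul_left, tsum_mul_left, ← hT]
    have h8 : 1 / (2 * √α) * ∑' k : ℕ, (k : ℝ) ^ 2 * π (k + (j + 2)) ≤ 1 / (2 * √α) * (α * T) :=
      mul_le_mul_of_nonneg_left hQ (by positivity)
    have h9 : 1 / (2 * √α) * (α * T) = √α / 2 * T := by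
      rw [← hss]
      field_simp
      simp
    linarith
  -- conclusion
  have hcast : ((j + 1 : ℕ) : ℝ) = (j : ℝ) + 1 := by push_cast; ring
  have hacast : β * ((j + 1 : ℕ) : ℝ) + ((j + 1 : ℕ) : ℝ) * (((j + 1 : ℕ) : ℝ) - 1) = a := by
    rw [hcast, ha]; ring
  rw [hacast, hcast]
  obtain ⟨M, hM⟩ : ∃ M, M = max ((j : ℝ) + 1) (√α + 1) := ⟨_, rfl⟩
  rw [← hM]
  have hM1 : (j : ℝ) + 1 ≤ M := hM ▸ le_max_left _ _
  have hM2 : √α + 1 ≤ M := hM ▸ le_max_right _ _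
  have hM0 : 0 ≤ M := by linarith
  have hL2 : |L| ≤ M * F := hLb.trans (mul_le_mul_of_nonneg_right hM1 hF0)
  have hR2 : |R| ≤ M * T := hRb.trans (mul_le_mul_of_nonneg_right hM2 hT0)
  obtain ⟨p, hpp⟩ : ∃ p, p = π (j + 1) := ⟨_, rfl⟩
  rw [← hpp] at hp hA hB htot hrj e2
  have hFe : F = 1 - p - T := by linarith
  have k1 : a * p * g (j + 1) = (p + T) * L - F * R := by
    rw [hrj, e1, hmLR]
    linear_combination -L * htot
  have k2 : α * p * g (j + 1 + 1) = T * L - (F + p) * R := by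
    rw [e2, hmLR]
    linear_combination -L * htot
  have kD : a * α * p * (g (j + 1 + 1) - g (j + 1)) =
      -(L * (α * (p + T) - a * T)) - R * (a * (F + p) - α * F) := by
    linear_combination a * k2 - α * k1
  have hA' : 0 ≤ α * (p + T) - a * T := by linarith
  have hB' : 0 ≤ a * (F + p) - α * F := by linarith
  have kabs : a * α * p * |g (j + 1 + 1) - g (j + 1)| ≤ a * α * p * (M * (F / a + T / α)) := by
    have h1 : a * α * p * |g (j + 1 + 1) - g (j + 1)| =
        |-(L * (α * (p + T) - a * T)) - R * (a * (F + p) - α * F)| := by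
      rw [← kD, abs_mul, abs_of_pos (by positivity : 0 < a * α * p)]
    rw [h1]
    refine (abs_sub _ _).trans ?_
    rw [abs_neg, abs_mul, abs_mul, abs_of_nonneg hA', abs_of_nonneg hB']
    have h2 := mul_le_mul_of_nonneg_right hL2 hA'
    have h3 := mul_le_mul_of_nonneg_right hR2 hB'
    have h4 : a * α * p * (M * (F / a + T / α)) =
        M * F * (α * (p + T) - a * T) + M * T * (a * (F + p) - α * F) := by
      field_simp
      ring
    linarith
  have kfin := le_of_mul_le_mul_left kabs (by positivity)
  refine kfin.trans (mul_le_mul_of_nonneg_left (le_min ?_ ?_) hM0)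
  · have : F / a ≤ (F + p) / α := by
      rw [div_le_div_iff₀ ha0 hα]; linarith
    calc F / a + T / α ≤ (F + p) / α + T / α := by linarith
      _ = 1 / α := by rw [← add_div, htot]
  · have : T / α ≤ (p + T) / a := by
      rw [div_le_div_iff₀ hα ha0]; linarith
    calc F / a + T / α ≤ F / a + (p + T) / a := by linarith
      _ = 1 / a := by rw [← add_div, ← add_assoc, htot]
end
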